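/- arXiv:1209.6462 — 5 statements merged into one kernel-verified Lean document; each statement's English description precedes it below -/
import Mathlib

section
/- Let n ≥ 2 and let D be a digital n-object. Then the number of (n−2)-gaps of D is given by g_{n−2}(D) = (n−1)·c*_{n−1}(D) − c*_{n−2}(D); equivalently (as an identity of natural numbers), g_{n−2}(D) + c*_{n−2}(D) = (n−1)·c*_{n−1}(D). -/
/-!
Call the `(n-2)`-cells ridges and the `(n-1)`-cells faces. The formula comes from counting in two
ways the pairs `(e, f)` with `e` a free ridge, `f` a free face and `e` bounding `f`.

* A face has exactly one even coordinate, and the ridges bounding it arise by moving one of the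
  other `n - 1` coordinates by `±1`. If the face is free, so are these ridges, because the block
  of the ridge contains the block of the face. Hence each free face lies in `2 (n - 1)` pairs
  (`card_ridges_of_face`).
* A ridge has exactly two even coordinates, its block is a `2 × 2` array of voxels, and the four
  faces it bounds separate the neighbouring voxels of this array. A face is free iff exactly one
  of its two voxels lies in `D`. Going once around a free ridge, membership in `D` changes four
  times if `D` fills a diagonal of the array, that is if the ridge is a hub, and twice otherwise
  (`card_faces_of_ridge`).

Every hub is free, so `2 c*_{n-2} + 2 g_{n-2} = 2 (n - 1) c*_{n-1}`.
-/

namespace DigitalGeometry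

/-- The dimension of a cell of the cubical grid (doubled coordinates):
the number of odd coordinates. -/
def cdim {n : ℕ} (c : Fin n → ℤ) : ℕ :=
  (Finset.univ.filter fun j => Odd (c j)).card

/-- The bounding relation `e < f` between cells of the grid. -/
def Bounds {n : ℕ} (e f : Fin n → ℤ) : Prop :=
  cdim e < cdim f ∧ ∀ j, e j = f j ∨ (Odd (f j) ∧ |e j - f j| = 1)

/-- A voxel is an `n`-cell: all coordinates odd. -/
def IsVoxel {n : ℕ} (v : Fin n → ℤ) : Prop := ∀ j, Odd (v j)

/-- The `i`-block centered on an `i`-cell `e`: all voxels bounded by `e`. -/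
def Block {n : ℕ} (e : Fin n → ℤ) : Set (Fin n → ℤ) :=
  {v | IsVoxel v ∧ Bounds e v}

/-- `Cells D i` : the `i`-cells of the object `D` (for `i < n` those bounding
some voxel of `D`; for `i = n` it is `D` itself). -/
def Cells {n : ℕ} (D : Set (Fin n → ℤ)) (i : ℕ) : Set (Fin n → ℤ) :=
  {e | cdim e = i ∧ (e ∈ D ∨ ∃ v ∈ D, Bounds e v)}

/-- `c_i(D)` : the number of `i`-cells of `D`. -/
noncomputable def cCount {n : ℕ} (D : Set (Fin n → ℤ)) (i : ℕ) : ℕ := (Cells D i).ncard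

/-- The free `i`-cells of `D`: those whose `i`-block is not contained in `D`. -/
def FreeCells {n : ℕ} (D : Set (Fin n → ℤ)) (i : ℕ) : Set (Fin n → ℤ) :=
  {e | e ∈ Cells D i ∧ ¬ Block e ⊆ D}

/-- `c*_i(D)` : the number of free `i`-cells of `D`. -/
noncomputable def cStar {n : ℕ} (D : Set (Fin n → ℤ)) (i : ℕ) : ℕ := (FreeCells D i).ncard

/-- The non-free `i`-cells of `D`. -/
def NonFreeCells {n : ℕ} (D : Set (Fin n → ℤ)) (i : ℕ) : Set (Fin n → ℤ) :=
  {e | e ∈ Cells D i ∧ Block e ⊆ D}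

/-- `c'_i(D)` : the number of non-free `i`-cells of `D`. -/
noncomputable def cPrime {n : ℕ} (D : Set (Fin n → ℤ)) (i : ℕ) : ℕ := (NonFreeCells D i).ncard

/-- `InterCell v1 v2 e` : the intersection of the voxels `v1`, `v2`
(as subsets of `ℝ^n`) equals the cell `e`. -/
def InterCell {n : ℕ} (v1 v2 e : Fin n → ℤ) : Prop :=
  ∀ j, (v1 j = v2 j ∧ e j = v1 j) ∨
       (e j + 1 = max (v1 j) (v2 j) ∧ e j - 1 = min (v1 j) (v2 j))

/-- `e` is an `(n-2)`-hub of `D`, i.e. `D` has an `(n-2)`-gap over `e`. -/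
def IsHub {n : ℕ} (D : Set (Fin n → ℤ)) (e : Fin n → ℤ) : Prop :=
  cdim e = n - 2 ∧ ∃ v1 v2 : Fin n → ℤ, v1 ≠ v2 ∧
    Block e ∩ D = {v1, v2} ∧ InterCell v1 v2 e

/-- `g_{n-2}(D)` : the number of `(n-2)`-gaps of `D`. -/
noncomputable def gapCount {n : ℕ} (D : Set (Fin n → ℤ)) : ℕ := {e | IsHub D e}.ncard

/-- `b_j(e, D)` : the number of free `j`-cells of `D` bounded by `e`. -/
noncomputable def bcount {n : ℕ} (e : Fin n → ℤ) (D : Set (Fin n → ℤ)) (j : ℕ) : ℕ :=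
  {f | f ∈ FreeCells D j ∧ Bounds e f}.ncard

/-- Two voxels are `i`-adjacent if they are distinct and their intersection
contains an `i`-cell. -/
def Adj {n : ℕ} (i : ℕ) (v1 v2 : Fin n → ℤ) : Prop :=
  v1 ≠ v2 ∧ ∃ e : Fin n → ℤ, cdim e = i ∧ Bounds e v1 ∧ Bounds e v2

/-! ### Parity and the bounding relation -/

/-- The cell obtained from `e` by moving coordinate `a` by `s`. -/
def shift {n : ℕ} (e : Fin n → ℤ) (a : Fin n) (s : ℤ) : Fin n → ℤ :=
  Function.update e a (e a + s)

lemma shift_self {n : ℕ} (e : Fin n → ℤ) (a : Fin n) (s : ℤ) : shift e a s a = e a + s := by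
  simp [shift]

lemma shift_of_ne {n : ℕ} (e : Fin n → ℤ) {a j : Fin n} (s : ℤ) (h : j ≠ a) :
    shift e a s j = e j := by
  simp [shift, h]

lemma shift_comm {n : ℕ} (e : Fin n → ℤ) {a b : Fin n} (h : a ≠ b) (s t : ℤ) :
    shift (shift e a s) b t = shift (shift e b t) a s := by
  funext j
  by_cases ha : j = a
  · subst ha; rw [shift_of_ne _ _ h, shift_self, shift_self, shift_of_ne _ _ h]
  · by_cases hb : j = b
    · subst hb; rw [shift_of_ne _ _ ha, shift_self, shift_self, shift_of_ne _ _ ha]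
    · rw [shift_of_ne _ _ hb, shift_of_ne _ _ ha, shift_of_ne _ _ ha, shift_of_ne _ _ hb]

lemma cdim_add_card_even {n : ℕ} (e : Fin n → ℤ) :
    cdim e + (Finset.univ.filter fun j => Even (e j)).card = n := by
  have h := Finset.card_filter_add_card_filter_not (s := (Finset.univ : Finset (Fin n)))
    (fun j => Odd (e j))
  simpa [cdim, Int.not_odd_iff_even] using h

lemma cdim_eq_sub_one_iff {n : ℕ} (hn : 2 ≤ n) (e : Fin n → ℤ) :
    cdim e = n - 1 ↔ ∃ a, ∀ j, Even (e j) ↔ j = a := by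
  have h := cdim_add_card_even e
  have : cdim e = n - 1 ↔ (Finset.univ.filter fun j => Even (e j)).card = 1 := by omega
  rw [this, Finset.card_eq_one]
  simp [Finset.ext_iff]

lemma cdim_eq_sub_two_iff {n : ℕ} (hn : 2 ≤ n) (e : Fin n → ℤ) :
    cdim e = n - 2 ↔ ∃ a b, a ≠ b ∧ ∀ j, Even (e j) ↔ j = a ∨ j = b := by
  have h := cdim_add_card_even e
  have : cdim e = n - 2 ↔ (Finset.univ.filter fun j => Even (e j)).card = 2 := by omega
  rw [this, Finset.card_eq_two]
  simp [Finset.ext_iff]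

lemma IsVoxel.cdim_eq {n : ℕ} {v : Fin n → ℤ} (hv : IsVoxel v) : cdim v = n := by
  simp [cdim, Finset.filter_true_of_mem (fun j _ => hv j)]

/-- The bounding relation read from the smaller cell: its odd coordinates are kept, its even ones
are kept or moved by one unit. -/
lemma bounds_iff {n : ℕ} {e f : Fin n → ℤ} (h : cdim e < cdim f) :
    Bounds e f ↔ ∀ j, f j = e j ∨ (Even (e j) ∧ (f j = e j + 1 ∨ f j = e j + -1)) := by
  unfold Bounds
  rw [and_iff_right h]
  refine forall_congr' fun j => ?_
  rw [abs_eq (by norm_num : (0 : ℤ) ≤ 1)]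
  constructor
  · rintro (h | ⟨h1, h2⟩)
    · exact Or.inl h.symm
    · right
      rw [Int.odd_iff] at h1
      rw [Int.even_iff]
      omega
  · rintro (h | ⟨h1, h2⟩)
    · exact Or.inl h.symm
    · right
      rw [Int.even_iff] at h1
      rw [Int.odd_iff]
      omega

lemma Bounds.trans {n : ℕ} {e f g : Fin n → ℤ} (h1 : Bounds e f) (h2 : Bounds f g) :
    Bounds e g := by
  refine ⟨h1.1.trans h2.1, fun j => ?_⟩
  rcases h1.2 j with h | ⟨h, h'⟩
  · rw [h]; exact h2.2 j
  · rcases h2.2 j with k | ⟨k, k'⟩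
    · rw [← k]; exact Or.inr ⟨h, h'⟩
    · rw [abs_eq (by norm_num : (0 : ℤ) ≤ 1)] at k'
      rw [Int.odd_iff] at h k
      omega

/-! ### Faces, ridges and their blocks -/

/-- An `(n-1)`-cell with even coordinate `a` bounds exactly two voxels. -/
lemma mem_block_face {n : ℕ} {f : Fin n → ℤ} {a : Fin n} (hf : ∀ j, Even (f j) ↔ j = a)
    (v : Fin n → ℤ) : v ∈ Block f ↔ v = shift f a 1 ∨ v = shift f a (-1) := by
  have hlt : cdim f < n := by
    have h := cdim_add_card_even f
    have : 0 < (Finset.univ.filter fun j => Even (f j)).card :=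
      Finset.card_pos.2 ⟨a, by simp [hf]⟩
    omega
  constructor
  · rintro ⟨hv, hb⟩
    rw [bounds_iff (by rw [hv.cdim_eq]; exact hlt)] at hb
    have key : ∀ s, v a = f a + s → v = shift f a s := by
      intro s hs
      funext j
      by_cases hj : j = a
      · subst hj; rw [shift_self, hs]
      · rw [shift_of_ne _ _ hj]
        rcases hb j with h | ⟨h, -⟩
        · exact h
        · exact absurd ((hf j).1 h) hj
    rcases hb a with h | ⟨-, h | h⟩
    · have := hv a
      rw [h, ← Int.not_even_iff_odd] at this
      exact absurd ((hf a).2 rfl) this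
    · exact Or.inl (key _ h)
    · exact Or.inr (key _ h)
  · have key : ∀ s : ℤ, (s = 1 ∨ s = -1) → shift f a s ∈ Block f := by
      intro s hs
      have hv : IsVoxel (shift f a s) := by
        intro j
        by_cases hj : j = a
        · subst hj
          have := (hf j).2 rfl
          rw [shift_self]
          rw [Int.even_iff] at this
          rw [Int.odd_iff]
          omega
        · rw [shift_of_ne _ _ hj, ← Int.not_even_iff_odd, hf]; exact hj
      refine ⟨hv, ?_⟩
      rw [bounds_iff (by rw [hv.cdim_eq]; exact hlt)]
      intro j
      by_cases hj : j = a
      · subst hj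
        refine Or.inr ⟨(hf j).2 rfl, ?_⟩
        rw [shift_self]
        omega
      · rw [shift_of_ne _ _ hj]; exact Or.inl rfl
    rintro (rfl | rfl)
    · exact key _ (Or.inl rfl)
    · exact key _ (Or.inr rfl)

lemma even_shift {n : ℕ} {e : Fin n → ℤ} {a b : Fin n} (hab : a ≠ b)
    (he : ∀ j, Even (e j) ↔ j = a ∨ j = b) {s : ℤ} (hs : s = 1 ∨ s = -1) :
    ∀ j, Even (shift e a s j) ↔ j = b := by
  intro j
  by_cases hj : j = a
  · subst hj
    have := (he j).2 (Or.inl rfl)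
    rw [shift_self]
    simp only [hab, iff_false]
    rw [Int.even_iff] at this ⊢
    omega
  · rw [shift_of_ne _ _ hj, he]; simp [hj]

/-- The `(n-1)`-cells bounded by an `(n-2)`-cell: choose one of its two even coordinates and
move it by one unit. -/
lemma bounds_ridge_face {n : ℕ} (hn : 2 ≤ n) {e : Fin n → ℤ} {a b : Fin n} (hab : a ≠ b)
    (he : ∀ j, Even (e j) ↔ j = a ∨ j = b) (f : Fin n → ℤ) :
    (cdim f = n - 1 ∧ Bounds e f) ↔
      f = shift e a 1 ∨ f = shift e a (-1) ∨ f = shift e b 1 ∨ f = shift e b (-1) := by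
  have hde : cdim e = n - 2 := (cdim_eq_sub_two_iff hn e).2 ⟨a, b, hab, he⟩
  constructor
  · rintro ⟨hf, hb⟩
    rw [bounds_iff (by omega)] at hb
    obtain ⟨c, hc⟩ := (cdim_eq_sub_one_iff hn f).1 hf
    have hval : ∀ j, j ≠ a → j ≠ b → f j = e j := by
      intro j h1 h2
      rcases hb j with h | ⟨h, -⟩
      · exact h
      · rcases (he j).1 h with h | h <;> contradiction
    have key : ∀ x y : Fin n, x ≠ y → (∀ j, Even (e j) ↔ j = x ∨ j = y) → c = y →
        (∀ j, j ≠ x → j ≠ y → f j = e j) → f = shift e x 1 ∨ f = shift e x (-1) := by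
      rintro x y hxy hxe rfl hv
      have hfc : f c = e c := by
        have h1 := (hc c).2 rfl
        have h2 := (hxe c).2 (Or.inr rfl)
        rw [Int.even_iff] at h1 h2
        rcases hb c with h | ⟨-, h⟩
        · exact h
        · omega
      have hfx : f x ≠ e x := by
        intro h
        have h1 := (hxe x).2 (Or.inl rfl)
        rw [← h, hc] at h1
        exact hxy h1
      have key : ∀ s, f x = e x + s → f = shift e x s := by
        intro s hs
        funext j
        by_cases hj : j = x
        · subst hj; rw [shift_self, hs]
        · rw [shift_of_ne _ _ hj]
          by_cases hj' : j = c
          · subst hj'; exact hfc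
          · exact hv j hj hj'
      rcases hb x with h | ⟨-, h | h⟩
      · exact absurd h hfx
      · exact Or.inl (key _ h)
      · exact Or.inr (key _ h)
    have hcab : c = a ∨ c = b := by
      by_contra hcon
      push Not at hcon
      have h1 := (hc c).2 rfl
      rw [hval c hcon.1 hcon.2, he] at h1
      tauto
    rcases hcab with h | h
    · have := key b a hab.symm (fun j => by rw [he, or_comm]) h (fun j h1 h2 => hval j h2 h1)
      tauto
    · have := key a b hab he h hval
      tauto
  · have key : ∀ x y : Fin n, x ≠ y → (∀ j, Even (e j) ↔ j = x ∨ j = y) → ∀ s : ℤ,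
        (s = 1 ∨ s = -1) → cdim (shift e x s) = n - 1 ∧ Bounds e (shift e x s) := by
      intro x y hxy hxe s hs
      have h1 : cdim (shift e x s) = n - 1 :=
        (cdim_eq_sub_one_iff hn _).2 ⟨y, even_shift hxy hxe hs⟩
      refine ⟨h1, (bounds_iff (by omega)).2 fun j => ?_⟩
      by_cases hj : j = x
      · subst hj
        refine Or.inr ⟨(hxe j).2 (Or.inl rfl), ?_⟩
        rw [shift_self]
        omega
      · rw [shift_of_ne _ _ hj]; exact Or.inl rfl
    have he' : ∀ j, Even (e j) ↔ j = b ∨ j = a := fun j => by rw [he, or_comm]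
    rintro (rfl | rfl | rfl | rfl)
    · exact key a b hab he _ (Or.inl rfl)
    · exact key a b hab he _ (Or.inr rfl)
    · exact key b a hab.symm he' _ (Or.inl rfl)
    · exact key b a hab.symm he' _ (Or.inr rfl)

/-- The block of an `(n-2)`-cell consists of four voxels. -/
lemma mem_block_ridge {n : ℕ} (hn : 2 ≤ n) {e : Fin n → ℤ} {a b : Fin n} (hab : a ≠ b)
    (he : ∀ j, Even (e j) ↔ j = a ∨ j = b) (v : Fin n → ℤ) :
    v ∈ Block e ↔ v = shift (shift e a 1) b 1 ∨ v = shift (shift e a 1) b (-1) ∨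
      v = shift (shift e a (-1)) b 1 ∨ v = shift (shift e a (-1)) b (-1) := by
  have hde : cdim e = n - 2 := (cdim_eq_sub_two_iff hn e).2 ⟨a, b, hab, he⟩
  have hface : ∀ s : ℤ, (s = 1 ∨ s = -1) → ∀ v, v ∈ Block (shift e a s) ↔
      v = shift (shift e a s) b 1 ∨ v = shift (shift e a s) b (-1) :=
    fun s hs v => mem_block_face (even_shift hab he hs) v
  constructor
  · rintro ⟨hv, hb⟩
    have hd : cdim e < cdim v := hb.1
    rw [bounds_iff hd] at hb
    have key : ∀ s t, v a = e a + s → v b = e b + t → v = shift (shift e a s) b t := by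
      intro s t hs ht
      funext j
      by_cases hj : j = b
      · subst hj; rw [shift_self, shift_of_ne _ _ hab.symm, ht]
      · rw [shift_of_ne _ _ hj]
        by_cases hj' : j = a
        · subst hj'; rw [shift_self, hs]
        · rw [shift_of_ne _ _ hj']
          rcases hb j with h | ⟨h, -⟩
          · exact h
          · rcases (he j).1 h with h | h <;> contradiction
    have hne : ∀ x, Even (e x) → v x = e x + 1 ∨ v x = e x + -1 := by
      intro x hx
      rcases hb x with h | ⟨-, h⟩
      · have := hv x
        rw [h, ← Int.not_even_iff_odd] at this
        exact absurd hx this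
      · exact h
    rcases hne a ((he a).2 (Or.inl rfl)) with h1 | h1 <;>
    rcases hne b ((he b).2 (Or.inr rfl)) with h2 | h2 <;>
    have := key _ _ h1 h2 <;> tauto
  · have key : ∀ s : ℤ, (s = 1 ∨ s = -1) → ∀ v, v ∈ Block (shift e a s) → v ∈ Block e := by
      intro s hs v hv
      refine ⟨hv.1, Bounds.trans ?_ hv.2⟩
      refine ((bounds_ridge_face hn hab he _).2 ?_).2
      rcases hs with rfl | rfl <;> tauto
    rintro (h | h | h | h)
    · exact key 1 (Or.inl rfl) v ((hface 1 (Or.inl rfl) v).2 (Or.inl h))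
    · exact key 1 (Or.inl rfl) v ((hface 1 (Or.inl rfl) v).2 (Or.inr h))
    · exact key (-1) (Or.inr rfl) v ((hface (-1) (Or.inr rfl) v).2 (Or.inl h))
    · exact key (-1) (Or.inr rfl) v ((hface (-1) (Or.inr rfl) v).2 (Or.inr h))

/-! ### Free cells -/

/-- Below dimension `n`, freeness says that the block meets both `D` and its complement. -/
lemma mem_freeCells_iff {n : ℕ} {D : Set (Fin n → ℤ)} (hvox : ∀ v ∈ D, IsVoxel v) {i : ℕ}
    (hi : i < n) {e : Fin n → ℤ} (he : cdim e = i) :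
    e ∈ FreeCells D i ↔ (∃ v ∈ Block e, v ∈ D) ∧ ∃ v ∈ Block e, v ∉ D := by
  have h1 : e ∉ D := fun h => by have := (hvox e h).cdim_eq; omega
  simp only [FreeCells, Cells, Set.mem_ofPred_eq, he, h1, true_and, false_or, Set.not_subset]
  refine and_congr_left fun _ => ⟨?_, ?_⟩
  · rintro ⟨v, hv, hb⟩; exact ⟨v, ⟨hvox v hv, hb⟩, hv⟩
  · rintro ⟨v, hb, hv⟩; exact ⟨v, hv, hb.2⟩

lemma face_free_iff {n : ℕ} (hn : 2 ≤ n) {D : Set (Fin n → ℤ)} (hvox : ∀ v ∈ D, IsVoxel v)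
    {f : Fin n → ℤ} {a : Fin n} (hf : ∀ j, Even (f j) ↔ j = a) :
    f ∈ FreeCells D (n - 1) ↔ ¬ (shift f a 1 ∈ D ↔ shift f a (-1) ∈ D) := by
  rw [mem_freeCells_iff hvox (by omega) ((cdim_eq_sub_one_iff hn f).2 ⟨a, hf⟩)]
  simp only [mem_block_face hf, or_and_right, exists_or, exists_eq_left]
  tauto

lemma freeCells_finite {n : ℕ} {D : Set (Fin n → ℤ)} (hfin : D.Finite) (i : ℕ) :
    (FreeCells D i).Finite := by
  refine (hfin.biUnion fun v _ => Set.finite_Icc (v - 1) (v + 1)).subset ?_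
  rintro e ⟨⟨-, h⟩, -⟩
  simp only [Set.mem_iUnion, Set.mem_Icc, Pi.le_def, Pi.sub_apply, Pi.add_apply, Pi.one_apply]
  rcases h with h | ⟨v, hv, -, hb⟩
  · exact ⟨e, h, fun j => by omega, fun j => by omega⟩
  · refine ⟨v, hv, fun j => ?_, fun j => ?_⟩ <;>
    · rcases hb j with h | ⟨-, h⟩
      · omega
      · rw [abs_eq (by norm_num : (0 : ℤ) ≤ 1)] at h
        omega

/-! ### Ridges bounding a free face -/

/-- Every free `(n-1)`-cell is bounded by `2(n-1)` cells of dimension `n-2`, all of them free. -/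
lemma card_ridges_of_face {n : ℕ} (hn : 2 ≤ n) {D : Set (Fin n → ℤ)}
    (hvox : ∀ v ∈ D, IsVoxel v) {f : Fin n → ℤ} (hf : f ∈ FreeCells D (n - 1)) :
    {e | e ∈ FreeCells D (n - 2) ∧ Bounds e f}.ncard = 2 * (n - 1) := by
  classical
  have hdf : cdim f = n - 1 := hf.1.1
  obtain ⟨c, hc⟩ := (cdim_eq_sub_one_iff hn f).1 hdf
  have hset : {e | e ∈ FreeCells D (n - 2) ∧ Bounds e f} =
      ((((Finset.univ.erase c) ×ˢ ({1, -1} : Finset ℤ)).image fun p => shift f p.1 p.2 :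
        Finset (Fin n → ℤ)) : Set (Fin n → ℤ)) := by
    ext e
    simp only [Set.mem_ofPred_eq, Finset.coe_image, Set.mem_image, Finset.mem_coe,
      Finset.mem_product, Finset.mem_erase, Finset.mem_univ, and_true, Finset.mem_insert,
      Finset.mem_singleton, Prod.exists]
    constructor
    · rintro ⟨he, hb⟩
      obtain ⟨a, b, hab, h⟩ := (cdim_eq_sub_two_iff hn e).1 he.1.1
      have key : ∀ x y : Fin n, x ≠ y → (∀ j, Even (e j) ↔ j = x ∨ j = y) → ∀ s : ℤ,
          (s = 1 ∨ s = -1) → f = shift e x s →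
          ∃ a b, (a ≠ c ∧ (b = 1 ∨ b = -1)) ∧ shift f a b = e := by
        rintro x y hxy hxe s hs rfl
        refine ⟨x, -s, ⟨?_, by omega⟩, ?_⟩
        · rintro rfl
          exact hxy ((even_shift hxy hxe hs x).1 ((hc x).2 rfl))
        · funext j
          by_cases hj : j = x
          · subst hj; rw [shift_self, shift_self]; omega
          · rw [shift_of_ne _ _ hj, shift_of_ne _ _ hj]
      have h' : ∀ j, Even (e j) ↔ j = b ∨ j = a := fun j => by rw [h, or_comm]
      rcases (bounds_ridge_face hn hab h f).1 ⟨hdf, hb⟩ with h1 | h1 | h1 | h1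
      · exact key a b hab h _ (Or.inl rfl) h1
      · exact key a b hab h _ (Or.inr rfl) h1
      · exact key b a hab.symm h' _ (Or.inl rfl) h1
      · exact key b a hab.symm h' _ (Or.inr rfl) h1
    · rintro ⟨a, s, ⟨hac, hs⟩, rfl⟩
      have hev : ∀ j, Even (shift f a s j) ↔ j = a ∨ j = c := by
        intro j
        by_cases hj : j = a
        · subst hj
          have h := mt (hc j).1 hac
          rw [Int.even_iff] at h
          simp only [shift_self, true_or, iff_true]
          rw [Int.even_iff]
          omega
        · rw [shift_of_ne _ _ hj, hc]; simp [hj]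
      have hd : cdim (shift f a s) = n - 2 := (cdim_eq_sub_two_iff hn _).2 ⟨a, c, hac, hev⟩
      have hb : Bounds (shift f a s) f := by
        refine (bounds_iff (by omega)).2 fun j => ?_
        by_cases hj : j = a
        · subst hj
          refine Or.inr ⟨(hev j).2 (Or.inl rfl), ?_⟩
          rw [shift_self]
          omega
        · rw [shift_of_ne _ _ hj]; exact Or.inl rfl
      refine ⟨?_, hb⟩
      rw [mem_freeCells_iff hvox (by omega) hdf] at hf
      rw [mem_freeCells_iff hvox (by omega) hd]
      obtain ⟨⟨v, hv, hvD⟩, w, hw, hwD⟩ := hf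
      exact ⟨⟨v, ⟨hv.1, hb.trans hv.2⟩, hvD⟩, w, ⟨hw.1, hb.trans hw.2⟩, hwD⟩
  rw [hset, Set.ncard_coe_finset, Finset.card_image_of_injOn, Finset.card_product,
    Finset.card_erase_of_mem (Finset.mem_univ _), Finset.card_univ, Fintype.card_fin]
  · rw [Finset.card_pair (by norm_num)]; ring
  · rintro ⟨a, s⟩ h1 ⟨b, t⟩ h2 h
    simp only [Finset.coe_product, Set.mem_prod, Finset.mem_coe, Finset.mem_insert,
      Finset.mem_singleton] at h1 h2
    have ha := congrFun h a
    simp only [shift_self] at ha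
    by_cases hab : a = b
    · subst hab
      rw [shift_self] at ha
      simpa using ha
    · rw [shift_of_ne _ _ hab] at ha
      omega

/-! ### Hubs and the faces around a free ridge -/

/-- An `(n-2)`-cell is a hub exactly when `D` meets its block in one of the two diagonals. -/
lemma isHub_iff {n : ℕ} (hn : 2 ≤ n) {D : Set (Fin n → ℤ)}
    {e : Fin n → ℤ} {a b : Fin n} (hab : a ≠ b) (he : ∀ j, Even (e j) ↔ j = a ∨ j = b) :
    IsHub D e ↔
      (shift (shift e a 1) b 1 ∈ D ∧ shift (shift e a 1) b (-1) ∉ D ∧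
        shift (shift e a (-1)) b 1 ∉ D ∧ shift (shift e a (-1)) b (-1) ∈ D) ∨
      (shift (shift e a 1) b 1 ∉ D ∧ shift (shift e a 1) b (-1) ∈ D ∧
        shift (shift e a (-1)) b 1 ∈ D ∧ shift (shift e a (-1)) b (-1) ∉ D) := by
  have hde : cdim e = n - 2 := (cdim_eq_sub_two_iff hn e).2 ⟨a, b, hab, he⟩
  have hblock := mem_block_ridge hn hab he
  have va : ∀ s t, shift (shift e a s) b t a = e a + s := fun s t => by
    rw [shift_of_ne _ _ hab, shift_self]
  have vb : ∀ s t, shift (shift e a s) b t b = e b + t := fun s t => by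
    rw [shift_self, shift_of_ne _ _ hab.symm]
  have vj : ∀ s t j, j ≠ a → j ≠ b → shift (shift e a s) b t j = e j := fun s t j h1 h2 => by
    rw [shift_of_ne _ _ h2, shift_of_ne _ _ h1]
  have vinj : ∀ s t s' t', shift (shift e a s) b t = shift (shift e a s') b t' ↔
      s = s' ∧ t = t' := by
    intro s t s' t'
    refine ⟨fun h => ?_, by rintro ⟨rfl, rfl⟩; rfl⟩
    have h1 := congrFun h a
    have h2 := congrFun h b
    rw [va, va] at h1
    rw [vb, vb] at h2
    omega
  constructor
  · rintro ⟨-, v1, v2, -, hD, hI⟩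
    have m1 : v1 ∈ Block e ∩ D := by rw [hD]; simp
    have m2 : v2 ∈ Block e ∩ D := by rw [hD]; simp
    have hmem : ∀ s t, shift (shift e a s) b t ∈ Block e → shift (shift e a s) b t ∈ D →
        shift (shift e a s) b t = v1 ∨ shift (shift e a s) b t = v2 := by
      intro s t h1 h2
      have : shift (shift e a s) b t ∈ Block e ∩ D := ⟨h1, h2⟩
      rw [hD] at this
      simpa using this
    have b1 := (hblock (shift (shift e a 1) b 1)).2 (by tauto)
    have b2 := (hblock (shift (shift e a 1) b (-1))).2 (by tauto)
    have b3 := (hblock (shift (shift e a (-1)) b 1)).2 (by tauto)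
    have b4 := (hblock (shift (shift e a (-1)) b (-1))).2 (by tauto)
    have c1 := hmem _ _ b1
    have c2 := hmem _ _ b2
    have c3 := hmem _ _ b3
    have c4 := hmem _ _ b4
    have ia := hI a
    have ib := hI b
    have h1D := m1.2
    have h2D := m2.2
    -- Of the sixteen choices of `v1` and `v2`, `InterCell` at `a` and `b` leaves only those where
    -- both coordinates differ.
    rcases (hblock v1).1 m1.1 with h | h | h | h <;>
    rcases (hblock v2).1 m2.1 with h' | h' | h' | h' <;>
    subst h <;> subst h' <;>
    simp only [vinj, va, vb] at c1 c2 c3 c4 ia ib <;>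
    first
    | (exfalso; omega)
    | (norm_num at c1 c2 c3 c4; tauto)
  · have key : ∀ s t : ℤ, (s = 1 ∨ s = -1) → (t = 1 ∨ t = -1) →
        InterCell (shift (shift e a s) b t) (shift (shift e a (-s)) b (-t)) e := by
      intro s t hs ht j
      by_cases h1 : j = a
      · subst h1; right; rw [va, va]; omega
      · by_cases h2 : j = b
        · subst h2; right; rw [vb, vb]; omega
        · left; rw [vj _ _ _ h1 h2, vj _ _ _ h1 h2]; exact ⟨rfl, rfl⟩
    rintro (⟨h1, h2, h3, h4⟩ | ⟨h1, h2, h3, h4⟩)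
    · refine ⟨hde, shift (shift e a 1) b 1, shift (shift e a (-1)) b (-1), ?_, ?_,
        key 1 1 (Or.inl rfl) (Or.inl rfl)⟩
      · rw [Ne, vinj]; norm_num
      · ext v
        rw [Set.mem_inter_iff, hblock, Set.mem_insert_iff, Set.mem_singleton_iff]
        constructor
        · rintro ⟨rfl | rfl | rfl | rfl, h⟩
          exacts [Or.inl rfl, absurd h h2, absurd h h3, Or.inr rfl]
        · rintro (rfl | rfl)
          exacts [⟨Or.inl rfl, h1⟩, ⟨Or.inr (Or.inr (Or.inr rfl)), h4⟩]
    · refine ⟨hde, shift (shift e a 1) b (-1), shift (shift e a (-1)) b 1, ?_, ?_, ?_⟩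
      · rw [Ne, vinj]; norm_num
      · ext v
        rw [Set.mem_inter_iff, hblock, Set.mem_insert_iff, Set.mem_singleton_iff]
        constructor
        · rintro ⟨rfl | rfl | rfl | rfl, h⟩
          exacts [absurd h h1, Or.inl rfl, Or.inr rfl, absurd h h4]
        · rintro (rfl | rfl)
          exacts [⟨Or.inr (Or.inl rfl), h2⟩, ⟨Or.inr (Or.inr (Or.inl rfl)), h3⟩]
      · simpa using key 1 (-1) (Or.inl rfl) (Or.inr rfl)

lemma ridge_free_iff {n : ℕ} (hn : 2 ≤ n) {D : Set (Fin n → ℤ)} (hvox : ∀ v ∈ D, IsVoxel v)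
    {e : Fin n → ℤ} {a b : Fin n} (hab : a ≠ b) (he : ∀ j, Even (e j) ↔ j = a ∨ j = b) :
    e ∈ FreeCells D (n - 2) ↔
      (shift (shift e a 1) b 1 ∈ D ∨ shift (shift e a 1) b (-1) ∈ D ∨
        shift (shift e a (-1)) b 1 ∈ D ∨ shift (shift e a (-1)) b (-1) ∈ D) ∧
      (shift (shift e a 1) b 1 ∉ D ∨ shift (shift e a 1) b (-1) ∉ D ∨
        shift (shift e a (-1)) b 1 ∉ D ∨ shift (shift e a (-1)) b (-1) ∉ D) := by
  rw [mem_freeCells_iff hvox (by omega) ((cdim_eq_sub_two_iff hn e).2 ⟨a, b, hab, he⟩)]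
  simp only [mem_block_ridge hn hab he, or_and_right, exists_or, exists_eq_left]

lemma IsHub.free {n : ℕ} (hn : 2 ≤ n) {D : Set (Fin n → ℤ)} (hvox : ∀ v ∈ D, IsVoxel v)
    {e : Fin n → ℤ} (h : IsHub D e) : e ∈ FreeCells D (n - 2) := by
  obtain ⟨a, b, hab, he⟩ := (cdim_eq_sub_two_iff hn e).1 h.1
  rw [isHub_iff hn hab he] at h
  rw [ridge_free_iff hn hvox hab he]
  tauto

open Classical in
/-- A free `(n-2)`-cell bounds four free `(n-1)`-cells if it is a hub and two otherwise: these
cells are the sides of the `2 × 2` block across which membership in `D` changes. -/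
lemma card_faces_of_ridge {n : ℕ} (hn : 2 ≤ n) {D : Set (Fin n → ℤ)}
    (hvox : ∀ v ∈ D, IsVoxel v) {e : Fin n → ℤ} (hfree : e ∈ FreeCells D (n - 2)) :
    {f | f ∈ FreeCells D (n - 1) ∧ Bounds e f}.ncard = 2 + 2 * (if IsHub D e then 1 else 0) := by
  obtain ⟨a, b, hab, he⟩ := (cdim_eq_sub_two_iff hn e).1 hfree.1.1
  have he' : ∀ j, Even (e j) ↔ j = b ∨ j = a := fun j => by rw [he, or_comm]
  have hset : {f | f ∈ FreeCells D (n - 1) ∧ Bounds e f} =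
      ((({shift e a 1, shift e a (-1), shift e b 1, shift e b (-1)} :
        Finset (Fin n → ℤ)).filter (· ∈ FreeCells D (n - 1)) : Finset (Fin n → ℤ)) :
        Set (Fin n → ℤ)) := by
    ext f
    simp only [Set.mem_ofPred_eq, Finset.coe_filter, Finset.mem_insert, Finset.mem_singleton]
    rw [← bounds_ridge_face hn hab he]
    constructor
    · rintro ⟨h1, h2⟩; exact ⟨⟨h1.1.1, h2⟩, h1⟩
    · rintro ⟨⟨-, h2⟩, h1⟩; exact ⟨h1, h2⟩
  have n1 : ∀ x, shift e x 1 ≠ shift e x (-1) := fun x h => by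
    have := congrFun h x
    rw [shift_self, shift_self] at this
    omega
  have n2 : ∀ s t : ℤ, s ≠ 0 → shift e a s ≠ shift e b t := fun s t hs h => by
    have := congrFun h a
    rw [shift_self, shift_of_ne _ _ hab] at this
    omega
  rw [hset, Set.ncard_coe_finset, Finset.card_filter, Finset.sum_insert, Finset.sum_insert,
    Finset.sum_insert, Finset.sum_singleton]
  · rw [ridge_free_iff hn hvox hab he] at hfree
    simp only [isHub_iff hn hab he,
      face_free_iff hn hvox (even_shift hab he (Or.inl rfl : (1 : ℤ) = 1 ∨ _)),
      face_free_iff hn hvox (even_shift hab he (Or.inr rfl : _ ∨ (-1 : ℤ) = -1)),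
      face_free_iff hn hvox (even_shift hab.symm he' (Or.inl rfl : (1 : ℤ) = 1 ∨ _)),
      face_free_iff hn hvox (even_shift hab.symm he' (Or.inr rfl : _ ∨ (-1 : ℤ) = -1)),
      shift_comm e hab.symm]
    generalize (shift (shift e a 1) b 1 ∈ D) = p at *
    generalize (shift (shift e a 1) b (-1) ∈ D) = q at *
    generalize (shift (shift e a (-1)) b 1 ∈ D) = r at *
    generalize (shift (shift e a (-1)) b (-1) ∈ D) = s at *
    -- Only the memberships of the four voxels matter now: check the sixteen patterns.
    by_cases p <;> by_cases q <;> by_cases r <;> by_cases s <;> simp_all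
  · simpa using n1 b
  · simp only [Finset.mem_insert, Finset.mem_singleton, not_or]
    exact ⟨n2 _ _ (by norm_num), n2 _ _ (by norm_num)⟩
  · simp only [Finset.mem_insert, Finset.mem_singleton, not_or]
    exact ⟨n1 a, n2 _ _ (by norm_num), n2 _ _ (by norm_num)⟩

/-! ### The double count -/

/-- The number of `(n-2)`-gaps of a digital `n`-object `D` is
`g_{n-2}(D) = (n-1)·c*_{n-1}(D) - c*_{n-2}(D)`, stated as an identity of
natural numbers. -/
theorem gap_formula (n : ℕ) (hn : 2 ≤ n) (D : Set (Fin n → ℤ))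
    (hfin : D.Finite) (hvox : ∀ v ∈ D, IsVoxel v) :
    gapCount D + cStar D (n - 2) = (n - 1) * cStar D (n - 1) := by
  classical
  have hS := freeCells_finite hfin (n - 2)
  have hT := freeCells_finite hfin (n - 1)
  have hdc := Finset.sum_card_bipartiteAbove_eq_sum_card_bipartiteBelow
    (s := hS.toFinset) (t := hT.toFinset) (Bounds (n := n))
  have hl : ∀ e ∈ hS.toFinset, (hT.toFinset.bipartiteAbove Bounds e).card =
      2 + 2 * (if IsHub D e then 1 else 0) := by
    intro e he
    rw [← card_faces_of_ridge hn hvox (hS.mem_toFinset.1 he), ← Set.ncard_coe_finset]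
    congr 1
    ext f
    simp [Finset.bipartiteAbove]
  have hr : ∀ f ∈ hT.toFinset, (hS.toFinset.bipartiteBelow Bounds f).card = 2 * (n - 1) := by
    intro f hf
    rw [← card_ridges_of_face hn hvox (hT.mem_toFinset.1 hf), ← Set.ncard_coe_finset]
    congr 1
    ext e
    simp [Finset.bipartiteBelow]
  have hg : gapCount D = (hS.toFinset.filter (IsHub D)).card := by
    rw [gapCount, ← Set.ncard_coe_finset]
    congr 1
    ext e
    simpa using fun h => IsHub.free hn hvox h
  rw [Finset.sum_congr rfl hl, Finset.sum_congr rfl hr, Finset.sum_add_distrib,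
    ← Finset.mul_sum, ← Finset.card_filter, ← hg] at hdc
  simp only [Finset.sum_const, smul_eq_mul] at hdc
  rw [cStar, cStar, Set.ncard_eq_toFinset_card _ hS, Set.ncard_eq_toFinset_card _ hT]
  linarith

end DigitalGeometry
end

section
/- Let 0 ≤ i < j ≤ n and let e be an i-cell of the n-dimensional cubical grid. Then the number of j-cells f with e < f equals 2^{j−i}·binom(n−i, j−i). (In other words, the maximum number c_{i←j} of j-cells of the grid bounded by a fixed i-cell is 2^{j−i}·binom(n−i, j−i); in particular, for j = n, the i-block B_i(e) consists of exactly 2^{n−i} voxels.) -/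
/-!
A cell `f` bounded by `e` is obtained by choosing the set `S` of coordinates where `f` differs
from `e`. These are even coordinates of `e`, each replaced by one of its two odd neighbours, so
`dim f = dim e + |S|`. Hence the `j`-cells above an `i`-cell are partitioned according to
`S`, an arbitrary `(j - i)`-subset of the `n - i` even coordinates of `e`, and each part is a
product of `j - i` two-element sets and singletons (`card_cellsOver`).
-/

namespace DigitalGeometry

/-- The even coordinates of `e`, i.e. the directions in which the cell `e` is degenerate. -/
def evens {n : ℕ} (e : Fin n → ℤ) : Finset (Fin n) :=
  Finset.univ.filter fun k => ¬ Odd (e k)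

/-- The cells obtained from `e` by moving each coordinate in `S` by `±1` and fixing the others. -/
def cellsOver {n : ℕ} (e : Fin n → ℤ) (S : Finset (Fin n)) : Finset (Fin n → ℤ) :=
  Fintype.piFinset fun k => if k ∈ S then {e k - 1, e k + 1} else {e k}

lemma card_evens {n : ℕ} (e : Fin n → ℤ) : (evens e).card = n - cdim e := by
  have h := Finset.card_filter_add_card_filter_not (s := (Finset.univ : Finset (Fin n)))
    (fun k => Odd (e k))
  rw [Finset.card_univ, Fintype.card_fin] at h
  unfold evens cdim
  omega

lemma card_cellsOver {n : ℕ} (e : Fin n → ℤ) (S : Finset (Fin n)) :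
    (cellsOver e S).card = 2 ^ S.card := by
  have h : ∀ k, (if k ∈ S then ({e k - 1, e k + 1} : Finset ℤ) else {e k}).card =
      if k ∈ S then 2 else 1 := by
    intro k
    split_ifs
    · exact Finset.card_pair (by omega)
    · simp
  simp [cellsOver, Fintype.card_piFinset, h]

lemma mem_cellsOver {n : ℕ} {e f : Fin n → ℤ} {S : Finset (Fin n)} :
    f ∈ cellsOver e S ↔
      ∀ k, (k ∈ S → f k = e k - 1 ∨ f k = e k + 1) ∧ (k ∉ S → f k = e k) := by
  rw [cellsOver, Fintype.mem_piFinset]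
  refine forall_congr' fun k => ?_
  by_cases hk : k ∈ S <;> simp [hk]

/-- The set `S` is recovered from a member of `cellsOver e S`, so that the sets `cellsOver e S`
are pairwise disjoint. -/
lemma eq_of_mem_cellsOver {n : ℕ} {e f : Fin n → ℤ} {S : Finset (Fin n)}
    (h : f ∈ cellsOver e S) : S = Finset.univ.filter fun k => f k ≠ e k := by
  rw [mem_cellsOver] at h
  ext k
  have := h k
  simp only [Finset.mem_filter, Finset.mem_univ, true_and]
  constructor
  · intro hk
    have := this.1 hk
    omega
  · intro hk
    by_contra hS
    exact hk (this.2 hS)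

lemma cdim_of_mem_cellsOver {n : ℕ} {e f : Fin n → ℤ} {S : Finset (Fin n)}
    (hS : S ⊆ evens e) (h : f ∈ cellsOver e S) : cdim f = cdim e + S.card := by
  classical
  rw [mem_cellsOver] at h
  have hS' : ∀ k ∈ S, ¬ Odd (e k) := fun k hk => by simpa [evens] using hS hk
  unfold cdim
  rw [← Finset.card_union_of_disjoint]
  · congr 1
    ext k
    simp only [Finset.mem_filter, Finset.mem_univ, true_and, Finset.mem_union]
    by_cases hk : k ∈ S
    · have h1 := (h k).1 hk
      have h2 := hS' k hk
      simp only [hk, or_true, iff_true]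
      rw [Int.odd_iff] at h2 ⊢
      omega
    · simp [hk, (h k).2 hk]
  · rw [Finset.disjoint_left]
    intro k hk hkS
    exact hS' k hkS (by simpa using hk)

/-- The coordinatewise part of `Bounds e f` says that `f` lies over a set of even coordinates. -/
lemma incident_iff {n : ℕ} {e f : Fin n → ℤ} :
    (∀ k, e k = f k ∨ (Odd (f k) ∧ |e k - f k| = 1)) ↔
      ∃ S ⊆ evens e, f ∈ cellsOver e S := by
  constructor
  · intro h
    refine ⟨Finset.univ.filter fun k => f k ≠ e k, ?_, ?_⟩
    · intro k hk
      simp only [Finset.mem_filter, Finset.mem_univ, true_and, evens] at hk ⊢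
      have := h k
      rw [Int.odd_iff, abs_eq (by norm_num)] at this
      rw [Int.odd_iff]
      omega
    · rw [mem_cellsOver]
      intro k
      have := h k
      rw [abs_eq (by norm_num)] at this
      simp only [Finset.mem_filter, Finset.mem_univ, true_and]
      omega
  · rintro ⟨S, hS, h⟩ k
    rw [mem_cellsOver] at h
    have hk := h k
    by_cases hkS : k ∈ S
    · have h1 := hk.1 hkS
      have h2 : ¬ Odd (e k) := by simpa [evens] using hS hkS
      right
      rw [Int.odd_iff] at h2 ⊢
      rw [abs_eq (by norm_num)]
      omega
    · exact Or.inl (hk.2 hkS).symm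

/-- The number of `j`-cells bounded by a fixed `i`-cell is `2^(j-i)·C(n-i,j-i)`. -/
theorem card_bounded_cells (n i j : ℕ) (hij : i < j) (hjn : j ≤ n)
    (e : Fin n → ℤ) (he : cdim e = i) :
    {f : Fin n → ℤ | cdim f = j ∧ Bounds e f}.ncard =
      2 ^ (j - i) * Nat.choose (n - i) (j - i) := by
  classical
  have hset : {f : Fin n → ℤ | cdim f = j ∧ Bounds e f} =
      ↑(((evens e).powersetCard (j - i)).biUnion (cellsOver e)) := by
    ext f
    simp only [Set.mem_ofPred_eq, Bounds, incident_iff, Finset.coe_biUnion, Set.mem_iUnion,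
      Finset.mem_coe, Finset.mem_powersetCard, exists_prop]
    constructor
    · rintro ⟨hj, -, S, hS, hf⟩
      have := cdim_of_mem_cellsOver hS hf
      exact ⟨S, ⟨hS, by omega⟩, hf⟩
    · rintro ⟨S, ⟨hS, hc⟩, hf⟩
      have := cdim_of_mem_cellsOver hS hf
      exact ⟨by omega, by omega, S, hS, hf⟩
  rw [hset, Set.ncard_coe_finset, Finset.card_biUnion]
  · rw [Finset.sum_congr rfl (g := fun _ => 2 ^ (j - i))]
    · rw [Finset.sum_const, Finset.card_powersetCard, card_evens, he, smul_eq_mul, mul_comm]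
    · intro S hS
      rw [card_cellsOver, (Finset.mem_powersetCard.1 hS).2]
  · intro S _ T _ hST
    rw [Function.onFun, Finset.disjoint_left]
    intro f hf hg
    exact hST ((eq_of_mem_cellsOver hf).trans (eq_of_mem_cellsOver hg).symm)

end DigitalGeometry
end

section
/- Let n ≥ 1, let f be an (n−1)-cell of the n-dimensional cubical grid, and let B = B_{n−1}(f) be the (n−1)-block centered on f, regarded as a digital n-object (it consists of two voxels). Then for every 0 ≤ i ≤ n, the number of i-cells of B satisfies 2n·c_i(B) = (3n+i)·2^{n−i}·binom(n, i). -/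
/-!
Let `k` be the unique index at which `f` is even. The cells of the block `B` centered on `f`,
of all dimensions together, are exactly the integer points of a box: the `k`-th coordinate
ranges over the five values `f k - 2, …, f k + 2`, and every other coordinate `j` over the
three values `f j - 1, f j, f j + 1` (`mem_cells_block_iff`). The dimension counts odd
coordinates, so its generating polynomial over a box is a product over the coordinates
(`sum_X_pow_cdim`). Here this product is `(3 + 2 X) (2 + X) ^ (n - 1)`, since
`f k - 2, …, f k + 2` holds three even and two odd integers, while `f j - 1, f j, f j + 1`
holds two even and one odd. Reading off the coefficient of `X ^ i` gives
`c_i(B) = 3 · 2^(n-1-i) · C(n-1, i) + 2 · 2^(n-i) · C(n-1, i-1)`, and the claim follows from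
`n C(n-1, i) = (n - i) C(n, i)` and `n C(n-1, i-1) = i C(n, i)`.
-/


namespace DigitalGeometry

open Polynomial in
/-- The generating polynomial of the dimension over a box of cells factors over the
coordinates. -/
lemma sum_X_pow_cdim {n : ℕ} (S : Fin n → Finset ℤ) :
    ∑ e ∈ Fintype.piFinset S, (X : ℕ[X]) ^ cdim e
      = ∏ j, ∑ x ∈ S j, if Odd x then (X : ℕ[X]) else 1 := by
  rw [Finset.prod_univ_sum]
  refine Finset.sum_congr rfl fun e _ => ?_
  rw [cdim, Finset.prod_ite]
  simp

open Polynomial in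
lemma card_filter_cdim {n : ℕ} (S : Fin n → Finset ℤ) (i : ℕ) :
    ((Fintype.piFinset S).filter fun e => cdim e = i).card
      = (∏ j, ∑ x ∈ S j, if Odd x then (X : ℕ[X]) else 1).coeff i := by
  rw [← sum_X_pow_cdim, finsetSum_coeff, Finset.card_filter]
  refine Finset.sum_congr rfl fun e _ => ?_
  rw [coeff_X_pow]
  simp only [eq_comm]

lemma cdim_le {n : ℕ} (e : Fin n → ℤ) : cdim e ≤ n := by
  simpa [cdim] using Finset.card_filter_le (Finset.univ : Finset (Fin n)) fun j => Odd (e j)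

lemma cdim_eq_iff {n : ℕ} (e : Fin n → ℤ) : cdim e = n ↔ IsVoxel e := by
  have h := Finset.card_filter_eq_iff (s := (Finset.univ : Finset (Fin n)))
    (p := fun j => Odd (e j))
  simpa [cdim, IsVoxel] using h

lemma exists_unique_even {m : ℕ} (f : Fin (m + 1) → ℤ) (hf : cdim f = m) :
    ∃ k, Even (f k) ∧ ∀ j, j ≠ k → Odd (f j) := by
  have h := Finset.card_filter_add_card_filter_not
    (s := (Finset.univ : Finset (Fin (m + 1)))) (fun j => Odd (f j))
  have h1 : (Finset.univ.filter fun j => ¬ Odd (f j)).card = 1 := by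
    unfold cdim at hf
    rw [hf] at h
    simp only [Finset.card_univ, Fintype.card_fin] at h
    omega
  obtain ⟨k, hk⟩ := Finset.card_eq_one.1 h1
  have hmem : ∀ j, ¬ Odd (f j) ↔ j = k := fun j => by
    simpa using congrArg (fun s => j ∈ s) hk
  refine ⟨k, Int.not_odd_iff_even.1 ((hmem k).2 rfl), fun j hj => ?_⟩
  by_contra h2
  exact hj ((hmem j).1 h2)

/-- The box whose integer points are the cells of the block centered on `f`, where `k` is the
even coordinate of `f`. -/
noncomputable def blockBox {n : ℕ} (f : Fin n → ℤ) (k j : Fin n) : Finset ℤ :=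
  if j = k then Finset.Icc (f j - 2) (f j + 2) else Finset.Icc (f j - 1) (f j + 1)

lemma mem_cells_block_iff {n : ℕ} (f : Fin n → ℤ) (k : Fin n) (hk : Even (f k))
    (hodd : ∀ j, j ≠ k → Odd (f j)) (i : ℕ) (e : Fin n → ℤ) :
    e ∈ Cells (Block f) i ↔ e ∈ Fintype.piFinset (blockBox f k) ∧ cdim e = i := by
  have hlt : ∀ c : Fin n → ℤ, ¬ IsVoxel c → cdim c < n := fun c hc =>
    lt_of_le_of_ne (cdim_le c) fun h => hc ((cdim_eq_iff c).1 h)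
  rw [and_comm, Cells, Set.mem_ofPred_eq]
  refine and_congr_right fun _ => ?_
  rw [Fintype.mem_piFinset]
  constructor
  · -- A voxel of the block agrees with `f` off `k` and differs from it by one at `k`.
    have key : ∀ v ∈ Block f, ∀ j, (j ≠ k → v j = f j) ∧ |v j - f j| ≤ 1 := by
      rintro v ⟨hv, -, hb⟩ j
      have hvj := hv j
      refine ⟨fun hj => ?_, ?_⟩
      · have hfj := hodd j hj
        rcases hb j with h | ⟨-, h⟩
        · exact h.symm
        · rw [Int.odd_iff] at hvj hfj
          rcases abs_eq (by norm_num) |>.1 h with h | h <;> omega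
      · rcases hb j with h | ⟨-, h⟩
        · simp [h]
        · rw [abs_sub_comm]; exact h.le
    rintro (he | ⟨v, hv, -, hb⟩) j
    · have h := abs_le.1 (key e he j).2
      unfold blockBox
      split_ifs <;> rw [Finset.mem_Icc] <;> omega
    · have h := abs_le.1 (key v hv j).2
      have h2 : |e j - v j| ≤ 1 := by
        rcases hb j with h | ⟨-, h⟩
        · simp [h]
        · exact h.le
      have h3 := abs_le.1 h2
      unfold blockBox
      split_ifs with hj
      · rw [Finset.mem_Icc]; omega
      · have := (key v hv j).1 hj
        rw [Finset.mem_Icc]; omega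
  · intro he
    -- The voxel of the block on the same side of `f` as `e`.
    obtain ⟨s, hs, hes⟩ : ∃ s : ℤ, |f k - s| = 1 ∧ |e k - s| ≤ 1 := by
      have h := he k
      rw [blockBox, if_pos rfl, Finset.mem_Icc] at h
      rcases le_total (f k) (e k) with h1 | h1
      · exact ⟨f k + 1, by simp, abs_le.2 (by omega)⟩
      · exact ⟨f k - 1, by simp, abs_le.2 (by omega)⟩
    have hsodd : Odd s := by
      rw [Int.even_iff] at hk
      rw [Int.odd_iff]
      rcases abs_eq (by norm_num) |>.1 hs with h | h <;> omega
    have hvox : IsVoxel (Function.update f k s) := by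
      intro j
      by_cases hj : j = k
      · subst hj; simpa using hsodd
      · simpa [hj] using hodd j hj
    have hv : Function.update f k s ∈ Block f := by
      refine ⟨hvox, ?_, fun j => ?_⟩
      · rw [(cdim_eq_iff _).2 hvox]
        exact hlt f fun h => (Int.not_odd_iff_even.2 hk) (h k)
      · by_cases hj : j = k
        · subst hj; right; simpa using ⟨hsodd, hs⟩
        · left; simp [hj]
    have hnear : ∀ j, |e j - Function.update f k s j| ≤ 1 := by
      intro j
      by_cases hj : j = k
      · subst hj; simpa using hes
      · have h := he j
        rw [blockBox, if_neg hj, Finset.mem_Icc] at h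
        rw [Function.update_of_ne hj, abs_le]
        omega
    have hcase : ∀ j, e j = Function.update f k s j ∨ |e j - Function.update f k s j| = 1 := by
      intro j
      have h := abs_le.1 (hnear j)
      rw [abs_eq (by norm_num)]
      omega
    by_cases hev : e = Function.update f k s
    · left; rw [hev]; exact hv
    · right
      refine ⟨_, hv, ?_, fun j => (hcase j).imp_right fun h => ⟨hvox j, h⟩⟩
      rw [(cdim_eq_iff _).2 hvox]
      obtain ⟨j, hj⟩ := Function.ne_iff.1 hev
      refine hlt e fun h => ?_
      have h1 := h j
      have h2 := hvox j
      rw [Int.odd_iff] at h1 h2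
      rcases abs_eq (by norm_num) |>.1 ((hcase j).resolve_left hj) with h | h <;> omega

open Polynomial in
lemma sum_Icc_two {a : ℤ} (ha : Even a) :
    (∑ x ∈ Finset.Icc (a - 2) (a + 2), if Odd x then (X : ℕ[X]) else 1) = 3 + 2 * X := by
  have h : Finset.Icc (a - 2) (a + 2) = {a - 2, a - 1, a, a + 1, a + 2} := by
    ext x; simp only [Finset.mem_Icc, Finset.mem_insert, Finset.mem_singleton]; omega
  rw [Int.even_iff] at ha
  have h1 : ¬ Odd (a - 2) := by rw [Int.odd_iff]; omega
  have h2 : Odd (a - 1) := by rw [Int.odd_iff]; omega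
  have h3 : ¬ Odd a := by rw [Int.odd_iff]; omega
  have h4 : Odd (a + 1) := by rw [Int.odd_iff]; omega
  have h5 : ¬ Odd (a + 2) := by rw [Int.odd_iff]; omega
  rw [h, Finset.sum_insert (by simp; omega), Finset.sum_insert (by simp; omega),
    Finset.sum_insert (by simp), Finset.sum_insert (by simp),
    Finset.sum_singleton, if_neg h1, if_pos h2, if_neg h3, if_pos h4, if_neg h5]
  ring

open Polynomial in
lemma sum_Icc_one {a : ℤ} (ha : Odd a) :
    (∑ x ∈ Finset.Icc (a - 1) (a + 1), if Odd x then (X : ℕ[X]) else 1) = X + C 2 := by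
  have h : Finset.Icc (a - 1) (a + 1) = {a - 1, a, a + 1} := by
    ext x; simp only [Finset.mem_Icc, Finset.mem_insert, Finset.mem_singleton]; omega
  have h1 : ¬ Odd (a - 1) := by rw [Int.odd_iff] at *; omega
  have h2 : ¬ Odd (a + 1) := by rw [Int.odd_iff] at *; omega
  rw [h, Finset.sum_insert (by simp; omega), Finset.sum_insert (by simp),
    Finset.sum_singleton, if_neg h1, if_pos ha, if_neg h2]
  have : (C 2 : ℕ[X]) = 2 := rfl
  rw [this]
  ring

open Polynomial in
lemma cCount_block {m : ℕ} (f : Fin (m + 1) → ℤ) (hf : cdim f = m) (i : ℕ) :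
    cCount (Block f) i = ((3 + 2 * X) * (X + C 2) ^ m : ℕ[X]).coeff i := by
  obtain ⟨k, hk, hodd⟩ := exists_unique_even f hf
  have hset : Cells (Block f) i =
      ↑((Fintype.piFinset (blockBox f k)).filter fun e => cdim e = i) := by
    ext e
    rw [mem_cells_block_iff f k hk hodd, Finset.mem_coe, Finset.mem_filter]
  rw [cCount, hset, Set.ncard_coe_finset, card_filter_cdim,
    ← Finset.mul_prod_erase _ _ (Finset.mem_univ k)]
  congr 2
  · rw [blockBox, if_pos rfl, sum_Icc_two hk]
  · rw [Finset.prod_congr rfl (g := fun _ => (X + C 2 : ℕ[X]))]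
    · simp
    · intro j hj
      have hjk := Finset.ne_of_mem_erase hj
      rw [blockBox, if_neg hjk, sum_Icc_one (hodd j hjk)]

open Polynomial in
lemma coeff_block_poly (m i : ℕ) (hi : i ≤ m + 1) :
    2 * (m + 1) * ((3 + 2 * X) * (X + C 2) ^ m : ℕ[X]).coeff i
      = (3 * (m + 1) + i) * (2 ^ (m + 1 - i) * Nat.choose (m + 1) i) := by
  have hexp : ((3 + 2 * X) * (X + C 2) ^ m : ℕ[X])
      = C 3 * (X + C 2) ^ m + C 2 * (X * (X + C 2) ^ m) := by
    have h2 : (C 2 : ℕ[X]) = 2 := rfl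
    have h3 : (C 3 : ℕ[X]) = 3 := rfl
    rw [h2, h3]; ring
  rw [hexp, coeff_add, coeff_C_mul, coeff_C_mul]
  -- `n C(n-1, i) = (n - i) C(n, i)`, with the matching powers of two.
  have hA : 2 * ((m + 1) * (2 ^ (m - i) * m.choose i))
      = (m + 1 - i) * (2 ^ (m + 1 - i) * (m + 1).choose i) := by
    have h := Nat.choose_mul_succ_eq m i
    rcases hi.eq_or_lt with rfl | hlt
    · simp
    · rw [Nat.sub_add_comm (Nat.lt_succ_iff.1 hlt), pow_succ] at *
      linear_combination 2 * 2 ^ (m - i) * h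
  cases i with
  | zero =>
    rw [coeff_X_mul_zero, coeff_X_add_C_pow]
    simp only [Nat.sub_zero, Nat.choose_zero_right, Nat.cast_one] at hA ⊢
    rw [pow_succ]
    push_cast
    ring
  | succ i =>
    rw [coeff_X_mul, coeff_X_add_C_pow, coeff_X_add_C_pow]
    -- `n C(n-1, i-1) = i C(n, i)`.
    have hB := Nat.add_one_mul_choose_eq m i
    obtain ⟨d, rfl⟩ : ∃ d, m = i + d := ⟨m - i, by omega⟩
    have e1 : i + d + 1 - (i + 1) = d := by omega
    have e2 : i + d - i = d := by omega
    rw [e1] at hA ⊢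
    rw [e2]
    simp only [Nat.cast_id]
    linear_combination 3 * hA + 4 * 2 ^ d * hB

/-- The number of `i`-cells of the `(n-1)`-block centered on an `(n-1)`-cell `f`
satisfies `2n·c_i(B_{n-1}(f)) = (3n+i)·2^(n-i)·C(n,i)`. -/
theorem cells_of_block (n : ℕ) (hn : 1 ≤ n) (f : Fin n → ℤ)
    (hf : cdim f = n - 1) (i : ℕ) (hi : i ≤ n) :
    2 * n * cCount (Block f) i = (3 * n + i) * (2 ^ (n - i) * Nat.choose n i) := by
  obtain ⟨m, rfl⟩ : ∃ m, n = m + 1 := ⟨n - 1, by omega⟩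
  rw [cCount_block f hf i, coeff_block_poly m i hi]

end DigitalGeometry
end

section
/- Let n ≥ 2, let e be an (n−2)-cell of the n-dimensional cubical grid, and let L be an L-block centered on e, regarded as a digital n-object. Then for every 0 ≤ i ≤ n, the number of i-cells of L satisfies n·c_i(L) = (2n+i)·2^{n−i}·binom(n, i). -/
/-!
The L-block is counted through the dimension generating function `∑ X ^ dim f`, which is
multiplicative over boxes `∏ j, S j` of cells (`sum_box`).  Let `a`, `b` be the two even
coordinates of `e` and let `w = 2 e - v` be the voxel opposite to `v` in the block.  The cells
of the L-block split into two disjoint boxes: the cells of the two voxels whose `a`-coordinate is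
`w a` (so the `b`-coordinate ranges over five values), and the cells of the third voxel whose
`a`-coordinate differs from `e a` (`mem_cells_iff`).

A coordinate ranging over a unit interval with both ends contributes `X + 2`, the five values
contribute `2 X + 3`, and an interval with one end removed contributes `X + 1`.  The generating
function is therefore `(X + 2) ^ (n - 1) * (3 X + 4)`, and the formula is read off from the
coefficient of `X ^ i` (`coeff_identity`).
-/

namespace DigitalGeometry

/-! ### Dimension generating functions -/

open Polynomial in
/-- The dimension generating function of a box of cells is the product over the coordinates of
the generating functions of the factors. -/
lemma sum_box {n : ℕ} (S : Fin n → Finset ℤ) :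
    ∑ f ∈ Fintype.piFinset S, (X : ℕ[X]) ^ cdim f
      = ∏ j, ∑ x ∈ S j, if Odd x then (X : ℕ[X]) else 1 := by
  rw [Finset.prod_univ_sum]
  refine Finset.sum_congr rfl fun f _ => ?_
  rw [cdim, Finset.prod_ite]
  simp

open Polynomial in
lemma coeff_sum_cdim {n : ℕ} (T : Finset (Fin n → ℤ)) (i : ℕ) :
    (∑ f ∈ T, (X : ℕ[X]) ^ cdim f).coeff i = (T.filter fun f => cdim f = i).card := by
  simp only [Polynomial.finsetSum_coeff, Polynomial.coeff_X_pow, Finset.card_filter,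
    eq_comm (a := i)]

open Polynomial in
lemma sum_three {m : ℤ} (hm : Odd m) :
    ∑ x ∈ Finset.Icc (m - 1) (m + 1), (if Odd x then (X : ℕ[X]) else 1) = X + 2 := by
  have h : Finset.Icc (m - 1) (m + 1) = {m - 1, m, m + 1} := by
    ext x; simp; omega
  have h1 : ¬ Odd (m - 1) := by grind
  have h2 : ¬ Odd (m + 1) := by grind
  rw [h, Finset.sum_insert (by simp; omega), Finset.sum_insert (by simp), Finset.sum_singleton,
    if_neg h1, if_neg h2, if_pos hm]
  ring

open Polynomial in
lemma sum_five {m : ℤ} (hm : ¬ Odd m) :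
    ∑ x ∈ Finset.Icc (m - 2) (m + 2), (if Odd x then (X : ℕ[X]) else 1) = 2 * X + 3 := by
  have h : Finset.Icc (m - 2) (m + 2) = {m - 2, m - 1, m, m + 1, m + 2} := by
    ext x; simp; omega
  have h1 : Odd (m - 1) := by grind
  have h2 : Odd (m + 1) := by grind
  have h3 : ¬ Odd (m - 2) := by grind
  have h4 : ¬ Odd (m + 2) := by grind
  rw [h, Finset.sum_insert (by simp; omega), Finset.sum_insert (by simp; omega),
    Finset.sum_insert (by simp), Finset.sum_insert (by simp), Finset.sum_singleton,
    if_neg hm, if_neg h3, if_neg h4, if_pos h1, if_pos h2]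
  ring

open Polynomial in
lemma sum_two {m p : ℤ} (hm : Odd m) (hp : |p - m| = 1) :
    ∑ x ∈ (Finset.Icc (m - 1) (m + 1)).erase p, (if Odd x then (X : ℕ[X]) else 1) = X + 1 := by
  -- the remaining even value is the reflection of `p` in `m`
  have h : (Finset.Icc (m - 1) (m + 1)).erase p = {m, 2 * m - p} := by
    ext x; simp; grind
  have h1 : ¬ Odd (2 * m - p) := by grind
  rw [h, Finset.sum_insert (by simp; grind), Finset.sum_singleton, if_neg h1, if_pos hm]

open Polynomial in
lemma coeff_identity (n i : ℕ) (hn : 1 ≤ n) (hi : i ≤ n) :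
    n * ((X + 2 : ℕ[X]) ^ (n - 1) * (3 * X + 4)).coeff i
      = (2 * n + i) * (2 ^ (n - i) * Nat.choose n i) := by
  obtain ⟨m, rfl⟩ : ∃ m, n = m + 1 := ⟨n - 1, by omega⟩
  have hX : (X + 2 : ℕ[X]) ^ (m + 1 - 1) * (3 * X + 4)
      = C 3 * ((X + C 2) ^ m * X) + C 4 * (X + C 2) ^ m := by
    have h2 : (C 2 : ℕ[X]) = 2 := rfl
    have h3 : (C 3 : ℕ[X]) = 3 := rfl
    have h4 : (C 4 : ℕ[X]) = 4 := rfl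
    rw [h2, h3, h4, Nat.add_sub_cancel]; ring
  rw [hX, coeff_add, coeff_C_mul, coeff_C_mul]
  cases i with
  | zero =>
    rw [coeff_mul_X_zero, coeff_X_add_C_pow]
    simp
    ring
  | succ k =>
    rw [coeff_mul_X, coeff_X_add_C_pow, coeff_X_add_C_pow]
    have h1 := Nat.add_one_mul_choose_eq m k
    have h2 := Nat.choose_succ_succ m k
    have h3 : m + 1 - (k + 1) = m - k := by omega
    rw [h3]
    simp only [Nat.cast_id]
    rcases Nat.lt_or_ge k m with hk | hk
    · obtain ⟨d, rfl⟩ : ∃ d, m = k + 1 + d := ⟨m - (k + 1), by omega⟩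
      have e1 : k + 1 + d - k = d + 1 := by omega
      have e2 : k + 1 + d - (k + 1) = d := by omega
      rw [e1, e2, pow_succ]
      zify at h1 h2 ⊢
      simp only [Nat.succ_eq_add_one] at h2
      generalize (((k + 1 + d + 1).choose (k + 1) : ℕ) : ℤ) = P at *
      generalize (((k + 1 + d).choose (k + 1) : ℕ) : ℤ) = Q at *
      generalize (((k + 1 + d).choose k : ℕ) : ℤ) = R at *
      subst h2
      linear_combination (2 : ℤ) ^ d * 2 * h1
    · obtain rfl : k = m := by omega
      simp
      ring

/-! ### Faces of voxels -/

lemma cdim_of_isVoxel {n : ℕ} {w : Fin n → ℤ} (hw : IsVoxel w) : cdim w = n := by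
  simp [cdim, Finset.filter_true_of_mem fun j _ => hw j]

/-- The faces of a voxel, the voxel itself included, are the cells within sup-distance one. -/
lemma eq_or_bounds_iff {n : ℕ} {f w : Fin n → ℤ} (hw : IsVoxel w) :
    (f = w ∨ Bounds f w) ↔ ∀ j, |f j - w j| ≤ 1 := by
  constructor
  · rintro (rfl | h) j
    · simp
    · rcases h.2 j with h | h
      · simp [h]
      · exact h.2.le
  · intro h
    by_cases hf : IsVoxel f
    · left
      ext j
      have := h j
      have := hf j
      have := hw j
      grind
    · right
      refine ⟨?_, fun j => ?_⟩
      · rw [cdim_of_isVoxel hw, cdim]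
        obtain ⟨j, hj⟩ := not_forall.1 hf
        calc _ < (Finset.univ : Finset (Fin n)).card :=
              Finset.card_lt_card (Finset.filter_ssubset.2 ⟨j, Finset.mem_univ j, hj⟩)
          _ = n := by simp
      · have := h j
        have := hw j
        grind

/-! ### Decomposition of the L-block into two boxes -/

/-- The factors of the box formed by the cells of the two voxels of the L-block with
`a`-coordinate `2 e a - v a`. -/
noncomputable def boxA {n : ℕ} (e v : Fin n → ℤ) (a b : Fin n) (j : Fin n) : Finset ℤ :=
  if j = a then Finset.Icc (2 * e a - v a - 1) (2 * e a - v a + 1)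
  else if j = b then Finset.Icc (e b - 2) (e b + 2)
  else Finset.Icc (e j - 1) (e j + 1)

/-- The factors of the box formed by the cells of the remaining voxel of the L-block that do not
lie in the box of `boxA`. -/
noncomputable def boxB {n : ℕ} (e v : Fin n → ℤ) (a b : Fin n) (j : Fin n) : Finset ℤ :=
  if j = a then (Finset.Icc (v a - 1) (v a + 1)).erase (e a)
  else if j = b then Finset.Icc (2 * e b - v b - 1) (2 * e b - v b + 1)
  else Finset.Icc (e j - 1) (e j + 1)

lemma mem_box {n : ℕ} {a b : Fin n} (hab : a ≠ b) (P Q : Finset ℤ) (R : Fin n → Finset ℤ)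
    (f : Fin n → ℤ) :
    (∀ j, f j ∈ if j = a then P else if j = b then Q else R j) ↔
      f a ∈ P ∧ f b ∈ Q ∧ ∀ j, j ≠ a → j ≠ b → f j ∈ R j := by
  constructor
  · intro h
    refine ⟨by simpa using h a, by simpa [hab.symm] using h b, fun j h1 h2 => ?_⟩
    simpa [h1, h2] using h j
  · rintro ⟨h1, h2, h3⟩ j
    split_ifs with ha hb
    · exact ha ▸ h1
    · exact hb ▸ h2
    · exact h3 j ha hb

lemma prod_box {n : ℕ} {M : Type*} [CommMonoid M] {a b : Fin n} (hab : a ≠ b)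
    (g : Fin n → M) (p q r : M) (ha : g a = p) (hb : g b = q)
    (hr : ∀ j, j ≠ a → j ≠ b → g j = r) : ∏ j, g j = p * (q * r ^ (n - 2)) := by
  rw [← Finset.mul_prod_erase _ _ (Finset.mem_univ a),
    ← Finset.mul_prod_erase _ _ (Finset.mem_erase.2 ⟨hab.symm, Finset.mem_univ b⟩), ha, hb]
  rw [Finset.prod_congr rfl (g := fun _ => r) fun j hj => hr j (by simp_all) (by simp_all),
    Finset.prod_const, Finset.card_erase_of_mem (by simp [hab.symm]),
    Finset.card_erase_of_mem (by simp)]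
  simp [Nat.sub_sub]

/-- Voxels of the block centered on a cell whose only even coordinates are `a` and `b`. -/
lemma mem_block_iff {n : ℕ} {e : Fin n → ℤ} {a b : Fin n} (hab : a ≠ b)
    (hev : ∀ j, ¬ Odd (e j) ↔ j = a ∨ j = b) (u : Fin n → ℤ) :
    u ∈ Block e ↔ (|u a - e a| = 1 ∧ |u b - e b| = 1 ∧ ∀ j, j ≠ a → j ≠ b → u j = e j) := by
  have ha := (hev a).2 (Or.inl rfl)
  have hb := (hev b).2 (Or.inr rfl)
  constructor
  · rintro ⟨hu, h⟩
    have h' := (eq_or_bounds_iff hu).1 (Or.inr h)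
    refine ⟨?_, ?_, fun j h1 h2 => ?_⟩
    · have := h' a; have := hu a; grind
    · have := h' b; have := hu b; grind
    · have := h' j; have := hu j
      have : Odd (e j) := by
        by_contra hc
        rcases (hev j).1 hc with h | h <;> contradiction
      grind
  · rintro ⟨h1, h2, h3⟩
    have hu : IsVoxel u := by
      intro j
      by_cases hja : j = a
      · subst hja; grind
      by_cases hjb : j = b
      · subst hjb; grind
      rw [h3 j hja hjb]
      by_contra hc
      rcases (hev j).1 hc with h | h <;> contradiction
    refine ⟨hu, ((eq_or_bounds_iff hu).2 fun j => ?_).resolve_left ?_⟩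
    · by_cases hja : j = a
      · subst hja; grind
      by_cases hjb : j = b
      · subst hjb; grind
      simp [h3 j hja hjb]
    · rintro rfl
      exact ha (hu a)

/-- The cells of the L-block are those of the two boxes. -/
lemma mem_cells_iff {n : ℕ} {e v : Fin n → ℤ} {a b : Fin n} (hab : a ≠ b)
    (hev : ∀ j, ¬ Odd (e j) ↔ j = a ∨ j = b) (hv : v ∈ Block e) (i : ℕ) (f : Fin n → ℤ) :
    f ∈ Cells (Block e \ {v}) i ↔
      cdim f = i ∧ ((∀ j, f j ∈ boxA e v a b j) ∨ ∀ j, f j ∈ boxB e v a b j) := by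
  have hB := mem_block_iff hab hev
  obtain ⟨hva, hvb, hvj⟩ := (hB v).1 hv
  have key : (f ∈ Block e \ {v} ∨ ∃ u ∈ Block e \ {v}, Bounds f u) ↔
      ∃ u ∈ Block e \ {v}, ∀ j, |f j - u j| ≤ 1 := by
    constructor
    · rintro (h | ⟨u, hu, h⟩)
      · exact ⟨f, h, by simp⟩
      · exact ⟨u, hu, (eq_or_bounds_iff hu.1.1).1 (Or.inr h)⟩
    · rintro ⟨u, hu, h⟩
      rcases (eq_or_bounds_iff hu.1.1).2 h with rfl | h
      · exact Or.inl hu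
      · exact Or.inr ⟨u, hu, h⟩
  simp only [Cells, Set.mem_ofPred_eq, boxA, boxB, mem_box hab, key]
  refine and_congr_right fun _ => ?_
  simp only [Finset.mem_erase, Finset.mem_Icc]
  constructor
  · rintro ⟨u, ⟨hu, huv⟩, hf⟩
    obtain ⟨hua, hub, huj⟩ := (hB u).1 hu
    have hfa := hf a
    have hfb := hf b
    have hfj : ∀ j, j ≠ a → j ≠ b → e j - 1 ≤ f j ∧ f j ≤ e j + 1 := by
      intro j h1 h2
      have := hf j
      rw [huj j h1 h2, abs_le] at this
      constructor <;> linarith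
    have hne : ¬ (u a = v a ∧ u b = v b) := by
      rintro ⟨h1, h2⟩
      apply huv
      ext j
      by_cases hja : j = a
      · rw [hja, h1]
      by_cases hjb : j = b
      · rw [hjb, h2]
      rw [huj j hja hjb, hvj j hja hjb]
    have : (2 * e a - v a - 1 ≤ f a ∧ f a ≤ 2 * e a - v a + 1) ∧
          (e b - 2 ≤ f b ∧ f b ≤ e b + 2) ∨
        (f a ≠ e a ∧ v a - 1 ≤ f a ∧ f a ≤ v a + 1) ∧
          (2 * e b - v b - 1 ≤ f b ∧ f b ≤ 2 * e b - v b + 1) := by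
      clear hfj huj hvj hf hev hB key
      rw [abs_le] at hfa hfb
      rw [abs_eq (by norm_num)] at hua hub hva hvb
      omega
    rcases this with ⟨h1, h2⟩ | ⟨h1, h2⟩
    · exact Or.inl ⟨h1, h2, hfj⟩
    · exact Or.inr ⟨h1, h2, hfj⟩
  · -- a voxel of the block is determined by its coordinates at `a` and `b`
    have mk : ∀ p q : ℤ, |p - e a| = 1 → |q - e b| = 1 → (p ≠ v a ∨ q ≠ v b) →
        |f a - p| ≤ 1 → |f b - q| ≤ 1 →
        (∀ j, j ≠ a → j ≠ b → e j - 1 ≤ f j ∧ f j ≤ e j + 1) →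
        ∃ u ∈ Block e \ {v}, ∀ j, |f j - u j| ≤ 1 := by
      intro p q hp hq hpq hfp hfq hfj
      refine ⟨fun j => if j = a then p else if j = b then q else e j, ⟨(hB _).2 ?_, ?_⟩, ?_⟩
      · refine ⟨by simpa using hp, by simpa [hab.symm] using hq, fun j h1 h2 => by simp [h1, h2]⟩
      · intro h
        rw [Set.mem_singleton_iff] at h
        have h1 := congrFun h a
        have h2 := congrFun h b
        simp [hab.symm] at h1 h2
        tauto
      · intro j
        by_cases hja : j = a
        · subst hja; simpa using hfp
        by_cases hjb : j = b
        · subst hjb; simpa [hja] using hfq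
        have := hfj j hja hjb
        simp only [hja, hjb, if_false, abs_le]
        constructor <;> linarith
    rw [abs_eq (by norm_num)] at hva hvb
    rintro (⟨h1, h2, hfj⟩ | ⟨h1, h2, hfj⟩)
    · by_cases hc : |f b - v b| ≤ 1
      · refine mk (2 * e a - v a) (v b) ?_ ?_ ?_ ?_ hc hfj
        · rw [abs_eq (by norm_num)]; omega
        · rw [abs_eq (by norm_num)]; omega
        · omega
        · rw [abs_le]; omega
      · rw [abs_le] at hc
        refine mk (2 * e a - v a) (2 * e b - v b) ?_ ?_ ?_ ?_ ?_ hfj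
        · rw [abs_eq (by norm_num)]; omega
        · rw [abs_eq (by norm_num)]; omega
        · omega
        · rw [abs_le]; omega
        · rw [abs_le]; omega
    · refine mk (v a) (2 * e b - v b) ?_ ?_ ?_ ?_ ?_ hfj
      · rw [abs_eq (by norm_num)]; omega
      · rw [abs_eq (by norm_num)]; omega
      · omega
      · rw [abs_le]; omega
      · rw [abs_le]; omega

lemma exists_even_pair {n : ℕ} (hn : 2 ≤ n) {e : Fin n → ℤ} (he : cdim e = n - 2) :
    ∃ a b, a ≠ b ∧ ∀ j, ¬ Odd (e j) ↔ j = a ∨ j = b := by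
  have h := Finset.card_filter_add_card_filter_not (s := (Finset.univ : Finset (Fin n)))
    (fun j => Odd (e j))
  rw [cdim] at he
  rw [he, Finset.card_univ, Fintype.card_fin] at h
  obtain ⟨a, b, hab, hs⟩ := Finset.card_eq_two.1
    (show (Finset.univ.filter fun j => ¬ Odd (e j)).card = 2 by omega)
  refine ⟨a, b, hab, fun j => ?_⟩
  have := Finset.ext_iff.1 hs j
  simpa using this

/-- The number of `i`-cells of an `L`-block centered on an `(n-2)`-cell `e`
satisfies `n·c_i(L) = (2n+i)·2^(n-i)·C(n,i)`. -/
theorem cells_of_Lblock (n : ℕ) (hn : 2 ≤ n) (e : Fin n → ℤ)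
    (he : cdim e = n - 2) (v : Fin n → ℤ) (hv : v ∈ Block e)
    (i : ℕ) (hi : i ≤ n) :
    n * cCount (Block e \ {v}) i = (2 * n + i) * (2 ^ (n - i) * Nat.choose n i) := by
  obtain ⟨a, b, hab, hev⟩ := exists_even_pair hn he
  obtain ⟨hva, hvb, hvj⟩ := (mem_block_iff hab hev v).1 hv
  have hea := (hev a).2 (Or.inl rfl)
  have heb := (hev b).2 (Or.inr rfl)
  have hej : ∀ j, j ≠ a → j ≠ b → Odd (e j) := by
    intro j h1 h2
    by_contra hc
    rcases (hev j).1 hc with h | h <;> contradiction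
  have hvoa : Odd (v a) := hv.1 a
  have hvob : Odd (v b) := hv.1 b
  have hcells : Cells (Block e \ {v}) i =
      ↑((Fintype.piFinset (boxA e v a b) ∪ Fintype.piFinset (boxB e v a b)).filter
        fun f => cdim f = i) := by
    ext f
    rw [mem_cells_iff hab hev hv]
    simp [Fintype.mem_piFinset, and_comm]
  -- the two boxes are already disjoint in the coordinate `a`
  have hdisj : Disjoint (Fintype.piFinset (boxA e v a b)) (Fintype.piFinset (boxB e v a b)) := by
    rw [Finset.disjoint_left]
    intro f h1 h2
    have h1 := Fintype.mem_piFinset.1 h1 a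
    have h2 := Fintype.mem_piFinset.1 h2 a
    simp only [boxA, boxB, if_true, Finset.mem_erase, Finset.mem_Icc] at h1 h2
    rw [abs_eq (by norm_num)] at hva
    omega
  rw [cCount, hcells, Set.ncard_coe_finset, ← coeff_sum_cdim, Finset.sum_union hdisj,
    sum_box, sum_box, ← coeff_identity n i (by omega) hi]
  rw [prod_box hab _ (Polynomial.X + 2) (2 * Polynomial.X + 3) (Polynomial.X + 2),
    prod_box hab _ (Polynomial.X + 1) (Polynomial.X + 2) (Polynomial.X + 2)]
  · obtain ⟨m, rfl⟩ : ∃ m, n = m + 2 := ⟨n - 2, by omega⟩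
    congr 2
    simp only [Nat.add_sub_cancel, show m + 2 - 1 = m + 1 by omega]
    ring
  · simp only [boxB, if_true]
    exact sum_two hvoa (by rw [abs_sub_comm]; exact hva)
  · simp only [boxB, if_neg hab.symm, if_true]
    exact sum_three (by grind)
  · intro j h1 h2
    simp only [boxB, if_neg h1, if_neg h2]
    exact sum_three (hej j h1 h2)
  · simp only [boxA, if_true]
    exact sum_three (by grind)
  · simp only [boxA, if_neg hab.symm, if_true]
    exact sum_five heb
  · intro j h1 h2
    simp only [boxA, if_neg h1, if_neg h2]
    exact sum_three (hej j h1 h2)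

end DigitalGeometry
end

section
/- Let n ≥ 2, let D be a digital n-object, and let e be an (n−2)-cell. Then D has an (n−2)-gap over e (i.e. e is an (n−2)-hub of D) if and only if there exist voxels v1, v2 ∈ D such that: (1) e < v1 and e < v2; (2) v1 is (n−2)-adjacent but not (n−1)-adjacent to v2 (i.e. v1 ∈ A_{n−2}(v2) \ A_{n−1}(v2)); and (3) no voxel of D is (n−1)-adjacent to both v1 and v2 (i.e. A_{n−1}(v1) ∩ A_{n−1}(v2) ∩ D = ∅). -/
/-!
An `(n-2)`-cell `e` has exactly two even coordinates `a`, `b`, so its block consists of the four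
voxels obtained from `e` by shifting these coordinates by `±1` (`bounds_codim_two_iff`). Two voxels
are `(n-1)`-adjacent exactly when they differ in one coordinate, by `2` (`adj_facet_iff`). Hence the
block is a 4-cycle for `(n-1)`-adjacency, and two of its voxels meet precisely in `e` iff they are
opposite in this cycle, i.e. differ in both `a` and `b`. The common `(n-1)`-neighbours of two
opposite voxels are exactly the other two voxels of the block, so `D` meets the block only in the
opposite pair iff no voxel of `D` is `(n-1)`-adjacent to both.
-/

namespace DigitalGeometry

/-- Bounding a voxel, coordinatewise: equality at the odd coordinates of the cell, a shift by
`±1` at the even ones. The dimension condition says that some coordinate is even. -/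
lemma bounds_voxel_iff {n : ℕ} {f v : Fin n → ℤ} (hv : IsVoxel v) :
    Bounds f v ↔ (∃ j, Even (f j)) ∧
      ∀ j, (Odd (f j) ∧ v j = f j) ∨ (Even (f j) ∧ (v j = f j + 1 ∨ v j = f j - 1)) := by
  have hdim : cdim f < cdim v ↔ ∃ j, Even (f j) := by
    have h1 : cdim v = n := by
      unfold cdim
      rw [Finset.filter_true_of_mem fun j _ => hv j]
      simp
    have h2 := Finset.card_filter_add_card_filter_not (s := (Finset.univ : Finset (Fin n)))
      (fun j => Odd (f j))
    rw [Finset.card_univ, Fintype.card_fin] at h2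
    have h3 : 0 < (Finset.univ.filter fun j => ¬ Odd (f j)).card ↔ ∃ j, Even (f j) := by
      rw [Finset.card_pos]
      simp [Finset.Nonempty]
    rw [← h3, h1]
    unfold cdim
    omega
  unfold Bounds
  rw [hdim]
  refine and_congr_right fun _ => forall_congr' fun j => ?_
  have hj := hv j
  rw [Int.odd_iff] at hj
  rw [Int.odd_iff, Int.odd_iff, Int.even_iff, abs_eq (by norm_num)]
  omega

lemma card_even {n k : ℕ} {f : Fin n → ℤ} (hk : k ≤ n) (hf : cdim f = n - k) :
    (Finset.univ.filter fun j => ¬ Odd (f j)).card = k := by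
  have h2 := Finset.card_filter_add_card_filter_not (s := (Finset.univ : Finset (Fin n)))
    (fun j => Odd (f j))
  rw [Finset.card_univ, Fintype.card_fin] at h2
  unfold cdim at hf
  omega

/-- Two voxels are `(n-1)`-adjacent exactly when they differ in a single coordinate, by `2` in
doubled coordinates. -/
lemma adj_facet_iff {n : ℕ} (hn : 1 ≤ n) {v w : Fin n → ℤ} (hv : IsVoxel v) (hw : IsVoxel w) :
    Adj (n - 1) v w ↔ ∃ j, (w j = v j + 2 ∨ w j = v j - 2) ∧ ∀ k, k ≠ j → v k = w k := by
  constructor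
  · rintro ⟨hne, f, hf, hfv, hfw⟩
    obtain ⟨j, hj⟩ := Finset.card_eq_one.mp (card_even hn hf)
    have hodd : ∀ k, Even (f k) → k = j := fun k hk => by
      have : k ∈ (Finset.univ.filter fun j => ¬ Odd (f j)) := by simpa using hk
      rw [hj] at this
      simpa using this
    have hv' := ((bounds_voxel_iff hv).mp hfv).2
    have hw' := ((bounds_voxel_iff hw).mp hfw).2
    have hoff : ∀ k, k ≠ j → v k = w k := fun k hk => by
      have h1 := hv' k
      have h2 := hw' k
      have h3 : ¬ Even (f k) := fun h => hk (hodd k h)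
      grind
    refine ⟨j, ?_, hoff⟩
    have hvw : v j ≠ w j := fun h => hne <| funext fun k => by
      by_cases hk : k = j
      · rw [hk, h]
      · exact hoff k hk
    have h1 := hv' j
    have h2 := hw' j
    rw [Int.odd_iff, Int.even_iff] at h1 h2
    omega
  · rintro ⟨j, hj, hoff⟩
    -- The common facet is centred at the midpoint of the two voxels.
    let f : Fin n → ℤ := Function.update v j ((v j + w j) / 2)
    have hfj : f j = (v j + w j) / 2 := by simp [f]
    have hfk : ∀ k, k ≠ j → f k = v k := fun k hk => by simp [f, hk]
    have hvj := hv j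
    rw [Int.odd_iff] at hvj
    have hev : Even (f j) := by
      rw [hfj, Int.even_iff]
      omega
    have hcard : (Finset.univ.filter fun j => Odd (f j)) = Finset.univ.erase j := by
      ext k
      by_cases hk : k = j
      · subst hk
        simpa using hev
      · simpa [hk, hfk k hk] using hv k
    refine ⟨fun h => by rw [h] at hj; omega, f, ?_, ?_, ?_⟩
    · unfold cdim
      rw [hcard, Finset.card_erase_of_mem (Finset.mem_univ j)]
      simp
    · refine (bounds_voxel_iff hv).mpr ⟨⟨j, hev⟩, fun k => ?_⟩
      by_cases hk : k = j
      · subst hk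
        exact Or.inr ⟨hev, by omega⟩
      · exact Or.inl ⟨by rw [hfk k hk]; exact hv k, (hfk k hk).symm⟩
    · refine (bounds_voxel_iff hw).mpr ⟨⟨j, hev⟩, fun k => ?_⟩
      by_cases hk : k = j
      · subst hk
        exact Or.inr ⟨hev, by omega⟩
      · exact Or.inl ⟨by rw [hfk k hk]; exact hv k, by rw [hfk k hk, hoff k hk]⟩

/-- The block of a cell with exactly two even coordinates `a`, `b` consists of the four voxels
obtained by shifting these two coordinates by `±1`. -/
lemma bounds_codim_two_iff {n : ℕ} {e v : Fin n → ℤ} {a b : Fin n} (ha : Even (e a))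
    (hb : Even (e b)) (hodd : ∀ k, k ≠ a → k ≠ b → Odd (e k)) (hv : IsVoxel v) :
    Bounds e v ↔ (v a = e a + 1 ∨ v a = e a - 1) ∧ (v b = e b + 1 ∨ v b = e b - 1) ∧
      ∀ k, k ≠ a → k ≠ b → v k = e k := by
  rw [bounds_voxel_iff hv]
  constructor
  · rintro ⟨-, h⟩
    refine ⟨?_, ?_, fun k hka hkb => ?_⟩
    · have := h a
      grind
    · have := h b
      grind
    · have := h k
      have := hodd k hka hkb
      grind
  · rintro ⟨h1, h2, h3⟩
    refine ⟨⟨a, ha⟩, fun k => ?_⟩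
    by_cases hka : k = a
    · subst hka
      exact Or.inr ⟨ha, h1⟩
    by_cases hkb : k = b
    · subst hkb
      exact Or.inr ⟨hb, h2⟩
    exact Or.inl ⟨hodd k hka hkb, h3 k hka hkb⟩

/-- `D` has an `(n-2)`-gap over an `(n-2)`-cell `e` iff there exist voxels
`v1, v2 ∈ D` bounded by `e` which are `(n-2)`- but not `(n-1)`-adjacent, and no
voxel of `D` is `(n-1)`-adjacent to both. -/
theorem hub_characterization (n : ℕ) (hn : 2 ≤ n) (D : Set (Fin n → ℤ))
    (hfin : D.Finite) (hvox : ∀ v ∈ D, IsVoxel v)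
    (e : Fin n → ℤ) (he : cdim e = n - 2) :
    IsHub D e ↔ ∃ v1 ∈ D, ∃ v2 ∈ D,
      (Bounds e v1 ∧ Bounds e v2) ∧
      (Adj (n - 2) v1 v2 ∧ ¬ Adj (n - 1) v1 v2) ∧
      (∀ v ∈ D, ¬ (Adj (n - 1) v1 v ∧ Adj (n - 1) v2 v)) := by
  have hn1 : 1 ≤ n := by omega
  obtain ⟨a, b, hab, hset⟩ := Finset.card_eq_two.mp (card_even hn he)
  have hmem : ∀ k, Even (e k) ↔ k = a ∨ k = b := fun k => by
    have : k ∈ (Finset.univ.filter fun j => ¬ Odd (e j)) ↔ k = a ∨ k = b := by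
      rw [hset]
      simp
    simpa using this
  have ha : Even (e a) := (hmem a).mpr (Or.inl rfl)
  have hb : Even (e b) := (hmem b).mpr (Or.inr rfl)
  have hodd : ∀ k, k ≠ a → k ≠ b → Odd (e k) := fun k hka hkb => by
    rw [← Int.not_even_iff_odd, hmem]
    tauto
  constructor
  · rintro ⟨-, v1, v2, hne, hblock, hinter⟩
    have hm1 : v1 ∈ Block e ∩ D := by simp [hblock]
    have hm2 : v2 ∈ Block e ∩ D := by simp [hblock]
    obtain ⟨⟨hv1, hb1⟩, hD1⟩ := hm1
    obtain ⟨⟨hv2, hb2⟩, hD2⟩ := hm2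
    obtain ⟨h1a, h1b, h1k⟩ := (bounds_codim_two_iff ha hb hodd hv1).mp hb1
    obtain ⟨h2a, h2b, h2k⟩ := (bounds_codim_two_iff ha hb hodd hv2).mp hb2
    have hda : v1 a ≠ v2 a := by
      have := hinter a
      omega
    have hdb : v1 b ≠ v2 b := by
      have := hinter b
      omega
    refine ⟨v1, hD1, v2, hD2, ⟨hb1, hb2⟩, ⟨⟨hne, e, he, hb1, hb2⟩, ?_⟩, ?_⟩
    · rw [adj_facet_iff hn1 hv1 hv2]
      rintro ⟨j, -, hj⟩
      by_cases hja : a = j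
      · exact hdb (hj b (by rw [← hja]; exact hab.symm))
      · exact hda (hj a hja)
    · rintro v hvD ⟨hA1, hA2⟩
      have hv := hvox v hvD
      have hne1 := hA1.1
      have hne2 := hA2.1
      rw [adj_facet_iff hn1 hv1 hv] at hA1
      rw [adj_facet_iff hn1 hv2 hv] at hA2
      obtain ⟨j, -, hj⟩ := hA1
      obtain ⟨l, -, hl⟩ := hA2
      -- Each coordinate of `v` comes from `v1` or `v2`, which puts `v` in the block of `e`.
      have hjl : j ≠ l := by
        rintro rfl
        by_cases hja : a = j
        · have hbj : b ≠ j := by rw [← hja]; exact hab.symm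
          exact hdb ((hj b hbj).trans (hl b hbj).symm)
        · exact hda ((hj a hja).trans (hl a hja).symm)
      have hcoord : ∀ k, v k = v1 k ∨ v k = v2 k := fun k => by
        by_cases hk : k = j
        · exact Or.inr (hl k (hk ▸ hjl)).symm
        · exact Or.inl (hj k hk).symm
      have hbv : Bounds e v := by
        refine (bounds_codim_two_iff ha hb hodd hv).mpr ⟨?_, ?_, fun k hka hkb => ?_⟩
        · have := hcoord a
          omega
        · have := hcoord b
          omega
        · have := hcoord k
          have := h1k k hka hkb
          have := h2k k hka hkb
          omega
      have hvm : v ∈ Block e ∩ D := ⟨⟨hv, hbv⟩, hvD⟩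
      rw [hblock] at hvm
      rcases hvm with h | h
      · exact hne1 h.symm
      · exact hne2 h.symm
  · rintro ⟨v1, hD1, v2, hD2, ⟨hb1, hb2⟩, ⟨⟨hne, -⟩, hnadj⟩, hno⟩
    have hv1 := hvox v1 hD1
    have hv2 := hvox v2 hD2
    obtain ⟨h1a, h1b, h1k⟩ := (bounds_codim_two_iff ha hb hodd hv1).mp hb1
    obtain ⟨h2a, h2b, h2k⟩ := (bounds_codim_two_iff ha hb hodd hv2).mp hb2
    -- Within the block, differing in exactly one of the coordinates `a`, `b` means sharing a facet.
    have adj_of_b : ∀ v w : Fin n → ℤ, IsVoxel v → IsVoxel w → Bounds e v → Bounds e w →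
        v a = w a → v b ≠ w b → Adj (n - 1) v w := by
      intro v w hv hw hbv hbw hEq hNe
      obtain ⟨-, hvb, hvk⟩ := (bounds_codim_two_iff ha hb hodd hv).mp hbv
      obtain ⟨-, hwb, hwk⟩ := (bounds_codim_two_iff ha hb hodd hw).mp hbw
      refine (adj_facet_iff hn1 hv hw).mpr ⟨b, by omega, fun k hk => ?_⟩
      by_cases hka : k = a
      · rw [hka, hEq]
      · rw [hvk k hka hk, hwk k hka hk]
    have adj_of_a : ∀ v w : Fin n → ℤ, IsVoxel v → IsVoxel w → Bounds e v → Bounds e w →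
        v b = w b → v a ≠ w a → Adj (n - 1) v w := by
      intro v w hv hw hbv hbw hEq hNe
      obtain ⟨hva, -, hvk⟩ := (bounds_codim_two_iff ha hb hodd hv).mp hbv
      obtain ⟨hwa, -, hwk⟩ := (bounds_codim_two_iff ha hb hodd hw).mp hbw
      refine (adj_facet_iff hn1 hv hw).mpr ⟨a, by omega, fun k hk => ?_⟩
      by_cases hkb : k = b
      · rw [hkb, hEq]
      · rw [hvk k hk hkb, hwk k hk hkb]
    have block_ext : ∀ v w : Fin n → ℤ, IsVoxel v → IsVoxel w → Bounds e v → Bounds e w →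
        v a = w a → v b = w b → v = w := by
      intro v w hv hw hbv hbw hEa hEb
      obtain ⟨-, -, hvk⟩ := (bounds_codim_two_iff ha hb hodd hv).mp hbv
      obtain ⟨-, -, hwk⟩ := (bounds_codim_two_iff ha hb hodd hw).mp hbw
      funext k
      by_cases hka : k = a
      · rw [hka, hEa]
      by_cases hkb : k = b
      · rw [hkb, hEb]
      rw [hvk k hka hkb, hwk k hka hkb]
    have hda : v1 a ≠ v2 a := fun h => by
      by_cases h' : v1 b = v2 b
      · exact hne (block_ext v1 v2 hv1 hv2 hb1 hb2 h h')
      · exact hnadj (adj_of_b v1 v2 hv1 hv2 hb1 hb2 h h')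
    have hdb : v1 b ≠ v2 b := fun h => hnadj (adj_of_a v1 v2 hv1 hv2 hb1 hb2 h hda)
    refine ⟨he, v1, v2, hne, Set.Subset.antisymm ?_ ?_, fun k => ?_⟩
    · rintro v ⟨⟨hv, hbv⟩, hvD⟩
      obtain ⟨hva, hvb, -⟩ := (bounds_codim_two_iff ha hb hodd hv).mp hbv
      -- `v` agrees with one of `v1`, `v2` in each of the coordinates `a`, `b`; a mixed choice
      -- makes it a common facet neighbour of both.
      by_cases hA : v1 a = v a <;> by_cases hB : v1 b = v b
      · exact Or.inl (block_ext v1 v hv1 hv hb1 hbv hA hB).symm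
      · exact absurd ⟨adj_of_b v1 v hv1 hv hb1 hbv hA hB,
          adj_of_a v2 v hv2 hv hb2 hbv (by omega) (by omega)⟩ (hno v hvD)
      · exact absurd ⟨adj_of_a v1 v hv1 hv hb1 hbv hB hA,
          adj_of_b v2 v hv2 hv hb2 hbv (by omega) (by omega)⟩ (hno v hvD)
      · exact Or.inr (block_ext v2 v hv2 hv hb2 hbv (by omega) (by omega)).symm
    · rintro v (rfl | rfl)
      · exact ⟨⟨hv1, hb1⟩, hD1⟩
      · exact ⟨⟨hv2, hb2⟩, hD2⟩
    · by_cases hka : k = a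
      · subst hka
        right
        omega
      by_cases hkb : k = b
      · subst hkb
        right
        omega
      left
      exact ⟨by rw [h1k k hka hkb, h2k k hka hkb], (h1k k hka hkb).symm⟩

end DigitalGeometry
end
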